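/- arXiv:1909.05081 — 5 statements merged into one kernel-verified Lean document; each statement's English description precedes it below -/
import Mathlib

section
/- Let A and B be nondeterministic Büchi automata over the same finite alphabet Σ. If A simulates B, L(A) = L(B), and B is good-for-games, then A is good-for-games. -/
/-!
A resolver for `A` is obtained by composing the resolver `f` of `B` with the duplicator's winning
strategy `τ`: on a finite word, let the spoiler play the run of `B` prescribed by `f` and answer
with `τ`. Along an infinite word `w`, the resulting run of `A` is the duplicator's run against the
resolver run of `B` on `w` (`NBA.composedResolver_prefix`). If `w ∈ L(A) = L(B)`, the resolver run
of `B` is accepting, hence so is the duplicator's run. Legality of a single move is obtained by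
extending the finite word to an arbitrary infinite one.
-/

/-- A nondeterministic Büchi automaton with a single initial state and
transition-based acceptance. -/
structure NBA (σ Q : Type) where
  init : Q
  trans : Q → σ → Q → Prop
  accept : Q → σ → Q → Prop

namespace NBA

variable {σ QA QB Q : Type}

/-- `r` is a run of `A` on the infinite word `w`. -/
def IsRun (A : NBA σ Q) (w : ℕ → σ) (r : ℕ → Q) : Prop :=
  r 0 = A.init ∧ ∀ i, A.trans (r i) (w i) (r (i + 1))

/-- The sequence `r` takes accepting transitions (on `w`) infinitely often. -/
def AccInf (A : NBA σ Q) (w : ℕ → σ) (r : ℕ → Q) : Prop :=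
  ∀ n, ∃ i, n ≤ i ∧ A.accept (r i) (w i) (r (i + 1))

/-- `r` is an accepting run of `A` on `w`. -/
def IsAccRun (A : NBA σ Q) (w : ℕ → σ) (r : ℕ → Q) : Prop :=
  A.IsRun w r ∧ A.AccInf w r

/-- The language of `A`: words with an accepting run. -/
def Lang (A : NBA σ Q) : Set (ℕ → σ) := {w | ∃ r, A.IsAccRun w r}

/-- The run of the duplicator (moving along `A`) induced by a strategy `τ`
(mapping finite histories of spoiler moves to duplicator states) against a
spoiler run `rB` on the word `w`. -/
def dupRun (A : NBA σ QA) (τ : List (σ × QB) → QA) (w : ℕ → σ) (rB : ℕ → QB) : ℕ → QA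
  | 0 => A.init
  | n + 1 => τ ((List.range (n + 1)).map fun i => (w i, rB (i + 1)))

/-- `A` simulates `B`: the duplicator, moving along `A`, has a strategy that
answers every spoiler run of `B` with legal transitions of `A` and wins every
play (his run of `A` is accepting, or the spoiler's run of `B` is not). -/
def Simulates (A : NBA σ QA) (B : NBA σ QB) : Prop :=
  ∃ τ : List (σ × QB) → QA,
    ∀ (w : ℕ → σ) (rB : ℕ → QB), B.IsRun w rB →
      (∀ i, A.trans (A.dupRun τ w rB i) (w i) (A.dupRun τ w rB (i + 1))) ∧
      (B.AccInf w rB → A.AccInf w (A.dupRun τ w rB))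

end NBA

/-- `A` is good-for-games: there is a resolver that resolves the nondeterminism
of `A` based only on the input read so far, producing an accepting run on every
word of the language of `A`. -/
def NBA.GFG {σ Q : Type} (A : NBA σ Q) : Prop :=
  ∃ f : List σ → Q,
    f [] = A.init ∧
    (∀ u a, A.trans (f u) a (f (u ++ [a]))) ∧
    ∀ w ∈ A.Lang, A.AccInf w fun i => f (List.ofFn fun k : Fin i => w k)

namespace NBA

variable {σ QA QB : Type}

/-- The duplicator's state after `n` rounds depends only on the first `n` spoiler moves. -/
theorem dupRun_congr (A : NBA σ QA) (τ : List (σ × QB) → QA) {w w' : ℕ → σ} {r r' : ℕ → QB}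
    {n : ℕ} (hw : ∀ i < n, w i = w' i) (hr : ∀ i ≤ n, r i = r' i) :
    A.dupRun τ w r n = A.dupRun τ w' r' n := by
  cases n with
  | zero => rfl
  | succ n =>
    simp only [dupRun]
    congr 1
    apply List.map_congr_left
    intro i hi
    rw [List.mem_range] at hi
    rw [hw i hi, hr (i + 1) hi]

/-- The composition of a resolver `f` for `B` with a duplicator strategy `τ`: the state reached by
the duplicator when the spoiler plays according to `f` on the given finite word. The first letter
`a` pads the word to an infinite one; the padding does not influence the value. -/
def composedResolver (A : NBA σ QA) (τ : List (σ × QB) → QA) (f : List σ → QB) : List σ → QA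
  | [] => A.init
  | a :: t =>
    A.dupRun τ (fun i => (a :: t).getD i a) (fun i => f ((a :: t).take i)) (t.length + 1)

theorem composedResolver_prefix (A : NBA σ QA) (τ : List (σ × QB) → QA) (f : List σ → QB)
    (w : ℕ → σ) (n : ℕ) :
    A.composedResolver τ f (List.ofFn fun k : Fin n => w k) =
      A.dupRun τ w (fun i => f (List.ofFn fun k : Fin i => w k)) n := by
  generalize hu : (List.ofFn fun k : Fin n => w k) = u
  have hlen : u.length = n := by simp [← hu]
  have hget : ∀ i (hi : i < u.length), u[i] = w i := by
    subst hu
    intro i hi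
    simp
  cases u with
  | nil =>
    subst hlen
    rfl
  | cons a t =>
    subst hlen
    rw [composedResolver, List.length_cons]
    apply dupRun_congr
    · intro i hi
      have hi' : i < (a :: t).length := hi
      rw [List.getD_eq_getElem _ _ hi', hget i hi']
    · intro i hi
      congr 1
      apply List.ext_getElem
      · simpa using hi
      · intro j h₁ h₂
        rw [List.getElem_take, hget, List.getElem_ofFn]

theorem prefix_succ (w : ℕ → σ) (n : ℕ) :
    (List.ofFn fun k : Fin (n + 1) => w k) = (List.ofFn fun k : Fin n => w k) ++ [w n] := by
  rw [List.ofFn_succ_last]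
  simp

end NBA

/-- If `A` simulates `B`, `L(A) = L(B)`, and `B` is good-for-games,
then `A` is good-for-games. -/
theorem gfg_of_simulates {σ QA QB : Type} [Fintype σ] [Fintype QA] [Fintype QB]
    (A : NBA σ QA) (B : NBA σ QB) (hsim : A.Simulates B) (hlang : A.Lang = B.Lang)
    (hgfg : B.GFG) : A.GFG := by
  obtain ⟨τ, hτ⟩ := hsim
  obtain ⟨f, hf0, hft, hfacc⟩ := hgfg
  have hrun : ∀ w : ℕ → σ, B.IsRun w (fun i => f (List.ofFn fun k : Fin i => w k)) := by
    intro w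
    refine ⟨by simpa using hf0, fun i => ?_⟩
    simp only [NBA.prefix_succ]
    exact hft _ _
  refine ⟨A.composedResolver τ f, rfl, fun u a => ?_, fun w hw => ?_⟩
  · -- Extend `u ++ [a]` to the infinite word `u a a a …`.
    let w : ℕ → σ := fun i => u.getD i a
    have hu : (List.ofFn fun k : Fin u.length => w k) = u := by
      apply List.ext_getElem
      · simp
      · intro j h₁ h₂
        simp [w]
    have hwa : w u.length = a := by simp [w]
    have hua : (List.ofFn fun k : Fin (u.length + 1) => w k) = u ++ [a] := by
      rw [NBA.prefix_succ, hu, hwa]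
    have h := (hτ w _ (hrun w)).1 u.length
    rwa [← NBA.composedResolver_prefix, ← NBA.composedResolver_prefix, hu, hua, hwa] at h
  · simp only [NBA.composedResolver_prefix]
    exact (hτ w _ (hrun w)).2 (hfacc w (hlang ▸ hw))
end

section
/- Let B = (Σ, Q, Q0, Δ, Γ) be a nondeterministic Büchi automaton with a set Q0 of initial states. The limit-deterministic automaton A = (Σ, 2^Q ∪ 3^Q, Q0, ndet(δ_S) ∪ Δ_SB ∪ ndet(δ_B), ndet(γ_B)) obtained from B by the combined subset and breakpoint construction recognizes the same language as B: L(A) = L(B). -/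
/-- A nondeterministic Büchi automaton with a set of initial states. -/
structure NBAm (σ Q : Type) where
  init : Set Q
  trans : Q → σ → Q → Prop
  accept : Q → σ → Q → Prop

namespace NBAm

variable {σ Q : Type}

/-- `r` is a run of `B` on the infinite word `w`. -/
def IsRun (B : NBAm σ Q) (w : ℕ → σ) (r : ℕ → Q) : Prop :=
  r 0 ∈ B.init ∧ ∀ i, B.trans (r i) (w i) (r (i + 1))

/-- The run `r` takes accepting transitions (on `w`) infinitely often. -/
def AccInf (B : NBAm σ Q) (w : ℕ → σ) (r : ℕ → Q) : Prop :=
  ∀ n, ∃ i, n ≤ i ∧ B.accept (r i) (w i) (r (i + 1))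

/-- The language of `B`. -/
def Lang (B : NBAm σ Q) : Set (ℕ → σ) := {w | ∃ r, B.IsRun w r ∧ B.AccInf w r}

end NBAm

variable {σ Q : Type}

/-- Subset transition function `δ_S`. -/
def deltaS (B : NBAm σ Q) (S : Set Q) (a : σ) : Set Q := {q' | ∃ q ∈ S, B.trans q a q'}

/-- Accepting subset transition function `γ_S`. -/
def gammaS (B : NBAm σ Q) (S : Set Q) (a : σ) : Set Q := {q' | ∃ q ∈ S, B.accept q a q'}

/-- The raw breakpoint transition function `δ_R`. -/
def rawB (B : NBAm σ Q) (p : Set Q × Set Q) (a : σ) : Set Q × Set Q :=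
  (deltaS B p.1 a, deltaS B p.2 a ∪ gammaS B p.1 a)

/-- The breakpoint transition relation `ndet(δ_B)` (as a relation, since `δ_B`
is partial: it is undefined when the successor subset is empty). -/
def breakTrans (B : NBAm σ Q) (p : Set Q × Set Q) (a : σ) (p' : Set Q × Set Q) : Prop :=
  (rawB B p a).1 ≠ ∅ ∧
    (((rawB B p a).1 ≠ (rawB B p a).2 ∧ p' = rawB B p a) ∨
      ((rawB B p a).1 = (rawB B p a).2 ∧ p' = ((rawB B p a).1, (∅ : Set Q))))

/-- The accepting breakpoint transitions `ndet(γ_B)`. -/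
def breakAcc (B : NBAm σ Q) (p : Set Q × Set Q) (a : σ) (p' : Set Q × Set Q) : Prop :=
  (rawB B p a).1 ≠ ∅ ∧ (rawB B p a).1 = (rawB B p a).2 ∧ p' = ((rawB B p a).1, (∅ : Set Q))

/-- The (accepting) transitions `ndet(γ_{2,1})` promoting the second set of a
breakpoint state to the first. -/
def gamma21 (B : NBAm σ Q) (p : Set Q × Set Q) (a : σ) (p' : Set Q × Set Q) : Prop :=
  deltaS B p.2 a ∪ gammaS B p.1 a ≠ ∅ ∧
    p' = (deltaS B p.2 a ∪ gammaS B p.1 a, (∅ : Set Q))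

/-- The transitions `Δ_SB` from the subset part to the breakpoint part. -/
def transSB (B : NBAm σ Q) (S : Set Q) (a : σ) (p' : Set Q × Set Q) : Prop :=
  p'.2 = ∅ ∧ p'.1 ≠ ∅ ∧ p'.1 ⊆ deltaS B S a

/-- The limit-deterministic automaton
`A = (Σ, 2^Q ∪ 3^Q, Q0, ndet(δ_S) ∪ Δ_SB ∪ ndet(δ_B), ndet(γ_B))` obtained from
`B` by the combined subset and breakpoint construction. -/
def ldba (B : NBAm σ Q) : NBA σ (Set Q ⊕ Set Q × Set Q) where
  init := Sum.inl B.init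
  trans := fun x a y =>
    match x, y with
    | Sum.inl S, Sum.inl S' => S' = deltaS B S a
    | Sum.inl S, Sum.inr p' => transSB B S a p'
    | Sum.inr p, Sum.inr p' => breakTrans B p a p'
    | Sum.inr _, Sum.inl _ => False
  accept := fun x a y =>
    match x, y with
    | Sum.inr p, Sum.inr p' => breakAcc B p a p'
    | _, _ => False

/-- The slim automaton
`S = (Σ, 3^Q, (Q0,∅), ndet(δ_B) ∪ ndet(γ_{2,1}), ndet(γ_B) ∪ ndet(γ_{2,1}))`. -/
def slim (B : NBAm σ Q) : NBA σ (Set Q × Set Q) where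
  init := (B.init, (∅ : Set Q))
  trans := fun p a p' => breakTrans B p a p' ∨ gamma21 B p a p'
  accept := fun p a p' => breakAcc B p a p' ∨ gamma21 B p a p'

/-! ### From accepting runs of the breakpoint automaton to accepting runs of `B` -/

/-- The first `m` steps of `r` are steps of `B` from an initial state, and `r` takes an accepting
transition between any two breakpoints before time `m`, where `bp j` says that the transition
taken at time `j` is a breakpoint. -/
def GoodPrefix (B : NBAm σ Q) (w : ℕ → σ) (bp : ℕ → Prop) (m : ℕ) (r : ℕ → Q) : Prop :=
  r 0 ∈ B.init ∧ (∀ i < m, B.trans (r i) (w i) (r (i + 1))) ∧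
    ∀ j < m, bp j → ∀ j₀ < j, bp j₀ → ∃ i, j₀ < i ∧ i ≤ j ∧ B.accept (r i) (w i) (r (i + 1))

/-- `r` takes an accepting transition after the last breakpoint before time `m`. -/
def AccSince (B : NBAm σ Q) (w : ℕ → σ) (bp : ℕ → Prop) (m : ℕ) (r : ℕ → Q) : Prop :=
  ∀ j₀ < m, bp j₀ → ∃ i, j₀ < i ∧ i < m ∧ B.accept (r i) (w i) (r (i + 1))

lemma GoodPrefix.congr {B : NBAm σ Q} {w : ℕ → σ} {bp : ℕ → Prop} {m : ℕ} {r s : ℕ → Q}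
    (h : GoodPrefix B w bp m r) (hs : ∀ i ≤ m, s i = r i) : GoodPrefix B w bp m s := by
  obtain ⟨h0, h1, h2⟩ := h
  refine ⟨by rw [hs 0 (by omega)]; exact h0, fun i hi => ?_, fun j hj hb j₀ hj₀ hb₀ => ?_⟩
  · rw [hs i (by omega), hs (i + 1) (by omega)]
    exact h1 i hi
  · obtain ⟨i, hi, hij, ha⟩ := h2 j hj hb j₀ hj₀ hb₀
    refine ⟨i, hi, hij, ?_⟩
    rw [hs i (by omega), hs (i + 1) (by omega)]
    exact ha

lemma GoodPrefix.mono {B : NBAm σ Q} {w : ℕ → σ} {bp : ℕ → Prop} {m n : ℕ} {r : ℕ → Q}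
    (h : GoodPrefix B w bp n r) (hmn : m ≤ n) : GoodPrefix B w bp m r :=
  ⟨h.1, fun i hi => h.2.1 i (by omega), fun j hj => h.2.2 j (by omega)⟩

lemma AccSince.congr {B : NBAm σ Q} {w : ℕ → σ} {bp : ℕ → Prop} {m : ℕ} {r s : ℕ → Q}
    (h : AccSince B w bp m r) (hs : ∀ i ≤ m, s i = r i) : AccSince B w bp m s := by
  intro j₀ hj₀ hb₀
  obtain ⟨i, hi, hij, ha⟩ := h j₀ hj₀ hb₀
  refine ⟨i, hi, hij, ?_⟩
  rw [hs i (by omega), hs (i + 1) (by omega)]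
  exact ha

/-- Without a breakpoint at time `m`, a good prefix can be prolonged by any transition. -/
lemma GoodPrefix.succ_of_not {B : NBAm σ Q} {w : ℕ → σ} {bp : ℕ → Prop} {m : ℕ} {r : ℕ → Q}
    (h : GoodPrefix B w bp m r) (hb : ¬ bp m) (ht : B.trans (r m) (w m) (r (m + 1))) :
    GoodPrefix B w bp (m + 1) r := by
  refine ⟨h.1, fun i hi => ?_, fun j hj hbj => ?_⟩
  · rcases Nat.lt_succ_iff_lt_or_eq.1 hi with hi | rfl
    · exact h.2.1 i hi
    · exact ht
  · rcases Nat.lt_succ_iff_lt_or_eq.1 hj with hj | rfl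
    · exact h.2.2 j hj hbj
    · exact absurd hbj hb

/-- A good prefix can be prolonged through a breakpoint if it has accepted, this step included,
since the preceding breakpoint. -/
lemma GoodPrefix.succ_of_acc {B : NBAm σ Q} {w : ℕ → σ} {bp : ℕ → Prop} {m : ℕ} {r : ℕ → Q}
    (h : GoodPrefix B w bp m r) (ht : B.trans (r m) (w m) (r (m + 1)))
    (ha : AccSince B w bp m r ∨ B.accept (r m) (w m) (r (m + 1))) :
    GoodPrefix B w bp (m + 1) r := by
  refine ⟨h.1, fun i hi => ?_, fun j hj hbj j₀ hj₀ hb₀ => ?_⟩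
  · rcases Nat.lt_succ_iff_lt_or_eq.1 hi with hi | rfl
    · exact h.2.1 i hi
    · exact ht
  · rcases Nat.lt_succ_iff_lt_or_eq.1 hj with hj | rfl
    · exact h.2.2 j hj hbj j₀ hj₀ hb₀
    · rcases ha with ha | ha
      · obtain ⟨i, h1, h2, h3⟩ := ha j₀ hj₀ hb₀
        exact ⟨i, h1, h2.le, h3⟩
      · exact ⟨j, hj₀, le_rfl, ha⟩

lemma AccSince.succ {B : NBAm σ Q} {w : ℕ → σ} {bp : ℕ → Prop} {m : ℕ} {r : ℕ → Q}
    (hb : ¬ bp m) (ha : AccSince B w bp m r ∨ B.accept (r m) (w m) (r (m + 1))) :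
    AccSince B w bp (m + 1) r := by
  intro j₀ hj₀ hb₀
  rcases Nat.lt_succ_iff_lt_or_eq.1 hj₀ with hj₀ | rfl
  · rcases ha with ha | ha
    · obtain ⟨i, h1, h2, h3⟩ := ha j₀ hj₀ hb₀
      exact ⟨i, h1, by omega, h3⟩
    · exact ⟨m, hj₀, by omega, ha⟩
  · exact absurd hb₀ hb

/-- The states that are ends of good prefixes of length `m`. -/
def goodEnds (B : NBAm σ Q) (w : ℕ → σ) (bp : ℕ → Prop) (m : ℕ) : Set Q :=
  {q | ∃ r, GoodPrefix B w bp m r ∧ r m = q}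

/-- The states that are ends of good prefixes of length `m` accepting since the last breakpoint. -/
def accEnds (B : NBAm σ Q) (w : ℕ → σ) (bp : ℕ → Prop) (m : ℕ) : Set Q :=
  {q | ∃ r, GoodPrefix B w bp m r ∧ AccSince B w bp m r ∧ r m = q}

lemma exists_extend (r : ℕ → Q) (m : ℕ) (q : Q) :
    ∃ s : ℕ → Q, (∀ i ≤ m, s i = r i) ∧ s (m + 1) = q :=
  ⟨fun i => if i ≤ m then r i else q, fun i hi => by simp [hi], by simp⟩

lemma deltaS_subset_goodEnds {B : NBAm σ Q} {w : ℕ → σ} {bp : ℕ → Prop} {m : ℕ} {S : Set Q}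
    (hS : S ⊆ goodEnds B w bp m) (hb : ¬ bp m) :
    deltaS B S (w m) ⊆ goodEnds B w bp (m + 1) := by
  rintro q' ⟨q, hq, ht⟩
  obtain ⟨r, hr, rfl⟩ := hS hq
  obtain ⟨s, hs, rfl⟩ := exists_extend r m q'
  exact ⟨s, (hr.congr hs).succ_of_not hb (by rwa [hs m le_rfl]), rfl⟩

/-- Each state in the second component of `rawB` is reached from a good prefix by a step after
which the prefix has accepted since the last breakpoint before time `m`. -/
lemma exists_of_mem_rawB {B : NBAm σ Q} (hacc : ∀ q a q', B.accept q a q' → B.trans q a q')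
    {w : ℕ → σ} {bp : ℕ → Prop} {m : ℕ} {p : Set Q × Set Q}
    (h₁ : p.1 ⊆ goodEnds B w bp m) (h₂ : p.2 ⊆ accEnds B w bp m) {q' : Q}
    (hq' : q' ∈ (rawB B p (w m)).2) :
    ∃ s, GoodPrefix B w bp (m + 1) s ∧
      (AccSince B w bp m s ∨ B.accept (s m) (w m) (s (m + 1))) ∧ s (m + 1) = q' := by
  rcases hq' with ⟨q, hq, ht⟩ | ⟨q, hq, ht⟩
  · obtain ⟨r, hr, ha, rfl⟩ := h₂ hq
    obtain ⟨s, hs, rfl⟩ := exists_extend r m q'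
    exact ⟨s, (hr.congr hs).succ_of_acc (by rwa [hs m le_rfl]) (.inl (ha.congr hs)),
      .inl (ha.congr hs), rfl⟩
  · obtain ⟨r, hr, rfl⟩ := h₁ hq
    obtain ⟨s, hs, rfl⟩ := exists_extend r m q'
    rw [← hs m le_rfl] at ht
    exact ⟨s, (hr.congr hs).succ_of_acc (hacc _ _ _ ht) (.inr ht), .inr ht, rfl⟩

/-- The invariant along a run of `ldba B`: first components consist of ends of good prefixes,
second components of ends of good prefixes accepting since the last breakpoint. -/
def EndsInv (B : NBAm σ Q) (w : ℕ → σ) (bp : ℕ → Prop) (m : ℕ) : Set Q ⊕ Set Q × Set Q → Prop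
  | Sum.inl S => S ⊆ goodEnds B w bp m
  | Sum.inr p => p.1 ⊆ goodEnds B w bp m ∧ p.2 ⊆ accEnds B w bp m

lemma goodPrefix_inv {B : NBAm σ Q} (hacc : ∀ q a q', B.accept q a q' → B.trans q a q')
    {w : ℕ → σ} {x : ℕ → Set Q ⊕ Set Q × Set Q} (hx : (ldba B).IsRun w x) (m : ℕ) :
    EndsInv B w (fun j => (ldba B).accept (x j) (w j) (x (j + 1))) m (x m) := by
  induction m with
  | zero =>
    rw [hx.1]
    intro q hq
    exact ⟨fun _ => q, ⟨hq, by simp, by simp⟩, rfl⟩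
  | succ m ih =>
    have ht := hx.2 m
    generalize hbp : (fun j => (ldba B).accept (x j) (w j) (x (j + 1))) = bp at ih ⊢
    have hm : bp m ↔ (ldba B).accept (x m) (w m) (x (m + 1)) := by rw [← hbp]
    generalize x m = y at *
    generalize x (m + 1) = z at *
    rcases y with S | p <;> rcases z with S' | p'
    · have hb : ¬ bp m := fun h => hm.1 h
      obtain rfl : S' = deltaS B S (w m) := ht
      exact deltaS_subset_goodEnds ih hb
    · have hb : ¬ bp m := fun h => hm.1 h
      obtain ⟨h2, -, h1⟩ : transSB B S (w m) p' := ht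
      exact ⟨h1.trans (deltaS_subset_goodEnds ih hb), by rw [h2]; exact Set.empty_subset _⟩
    · exact ht.elim
    · obtain ⟨ih1, ih2⟩ := ih
      obtain ⟨hne, ⟨hneq, rfl⟩ | ⟨heq, rfl⟩⟩ : breakTrans B p (w m) p' := ht
      · have hb : ¬ bp m := fun h => hneq (hm.1 h).2.1
        refine ⟨deltaS_subset_goodEnds ih1 hb, fun q' hq' => ?_⟩
        obtain ⟨s, hs, ha, rfl⟩ := exists_of_mem_rawB hacc ih1 ih2 hq'
        exact ⟨s, hs, AccSince.succ hb ha, rfl⟩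
      · refine ⟨fun q' hq' => ?_, Set.empty_subset _⟩
        -- At a breakpoint the two components agree, so every state of the first one has
        -- a prefix that accepted since the preceding breakpoint.
        obtain ⟨s, hs, -, rfl⟩ := exists_of_mem_rawB hacc ih1 ih2 (heq ▸ hq')
        exact ⟨s, hs, rfl⟩

/-- König's lemma, in the form of compactness of `ℕ → Q` for finite `Q`. -/
lemma exists_forall_goodPrefix [Finite Q] {B : NBAm σ Q} {w : ℕ → σ} {bp : ℕ → Prop}
    (h : ∀ m, ∃ r, GoodPrefix B w bp m r) : ∃ r, ∀ m, GoodPrefix B w bp m r := by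
  let _ : TopologicalSpace Q := ⊥
  have : DiscreteTopology Q := ⟨rfl⟩
  have hclosed : ∀ m, IsClosed {r | GoodPrefix B w bp m r} := by
    intro m
    -- Only the coordinates up to `m` matter, so the set is the preimage of a subset of a
    -- finite product of discrete spaces.
    have hpre : {r | GoodPrefix B w bp m r} =
        (fun (r : ℕ → Q) (i : Fin (m + 1)) => r i) ⁻¹'
          {s | GoodPrefix B w bp m fun i => s ⟨min i m, by omega⟩} := by
      ext r
      change GoodPrefix B w bp m r ↔ GoodPrefix B w bp m fun i => r (min i m)
      exact ⟨fun hr => hr.congr fun i hi => by simp [hi], fun hr => hr.congr fun i hi => by simp [hi]⟩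
    rw [hpre]
    exact (isClosed_discrete _).preimage (by fun_prop)
  obtain ⟨r, hr⟩ := IsCompact.nonempty_iInter_of_sequence_nonempty_isCompact_isClosed
    (fun m => {r | GoodPrefix B w bp m r})
    (fun m r hr => GoodPrefix.mono hr (Nat.le_succ m)) h (hclosed 0).isCompact hclosed
  exact ⟨r, fun m => Set.mem_iInter.1 hr m⟩

lemma ldba_lang_subset [Finite Q] (B : NBAm σ Q)
    (hacc : ∀ q a q', B.accept q a q' → B.trans q a q') : (ldba B).Lang ⊆ B.Lang := by
  rintro w ⟨x, hx, hinf⟩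
  have hinv := goodPrefix_inv hacc hx
  obtain ⟨r, hr⟩ := exists_forall_goodPrefix (B := B) (w := w)
      (bp := fun j => (ldba B).accept (x j) (w j) (x (j + 1))) (by
    intro m
    -- Breakpoints lead to states with nonempty first component.
    obtain ⟨j, hj, hb⟩ := hinf m
    have hjinv := hinv (j + 1)
    generalize hbp : (fun j => (ldba B).accept (x j) (w j) (x (j + 1))) = bp at hjinv ⊢
    generalize x j = y at hb
    generalize x (j + 1) = z at hb hjinv
    rcases y with S | p <;> rcases z with S' | p'
    · exact hb.elim
    · exact hb.elim
    · exact hb.elim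
    · obtain ⟨hne, -, rfl⟩ : breakAcc B p (w j) p' := hb
      obtain ⟨q, hq⟩ := Set.nonempty_iff_ne_empty.2 hne
      obtain ⟨r, hr, -⟩ := hjinv.1 hq
      exact ⟨r, hr.mono (by omega)⟩)
  refine ⟨r, ⟨(hr 0).1, fun i => (hr (i + 1)).2.1 i (by omega)⟩, fun n => ?_⟩
  obtain ⟨j₀, hj₀, hb₀⟩ := hinf n
  obtain ⟨j, hj, hb⟩ := hinf (j₀ + 1)
  obtain ⟨i, hi, -, ha⟩ := (hr (j + 1)).2.2 j (by omega) hb j₀ (by omega) hb₀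
  exact ⟨i, by omega, ha⟩

/-! ### From accepting runs of `B` to accepting runs of the breakpoint automaton -/

open Classical in
/-- The successor under `δ_B`, with no undefinedness for an empty successor subset. -/
noncomputable def bpStep (B : NBAm σ Q) (p : Set Q × Set Q) (a : σ) : Set Q × Set Q :=
  if (rawB B p a).1 = (rawB B p a).2 then ((rawB B p a).1, ∅) else rawB B p a

/-- The breakpoint run starting in `({r N}, ∅)` at time `N`; its value at a time `m ≤ N` is
`({r m}, ∅)`. -/
noncomputable def bpSeq (B : NBAm σ Q) (w : ℕ → σ) (r : ℕ → Q) (N : ℕ) : ℕ → Set Q × Set Q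
  | 0 => ({r 0}, ∅)
  | m + 1 => if m + 1 ≤ N then ({r (m + 1)}, ∅) else bpStep B (bpSeq B w r N m) (w m)

lemma bpStep_fst (B : NBAm σ Q) (p : Set Q × Set Q) (a : σ) :
    (bpStep B p a).1 = deltaS B p.1 a := by
  unfold bpStep
  split_ifs <;> rfl

lemma deltaS_mono (B : NBAm σ Q) {S T : Set Q} (h : S ⊆ T) (a : σ) :
    deltaS B S a ⊆ deltaS B T a :=
  fun _ ⟨q, hq, ht⟩ => ⟨q, h hq, ht⟩

lemma bpSeq_of_le (B : NBAm σ Q) (w : ℕ → σ) (r : ℕ → Q) {N m : ℕ} (h : m ≤ N) :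
    bpSeq B w r N m = ({r m}, ∅) := by
  cases m with
  | zero => rfl
  | succ m => simp [bpSeq, h]

lemma bpSeq_succ (B : NBAm σ Q) (w : ℕ → σ) (r : ℕ → Q) {N m : ℕ} (h : N ≤ m) :
    bpSeq B w r N (m + 1) = bpStep B (bpSeq B w r N m) (w m) := by
  simp [bpSeq, show ¬ m + 1 ≤ N by omega]

lemma mem_bpSeq {B : NBAm σ Q} {w : ℕ → σ} {r : ℕ → Q}
    (hr : ∀ i, B.trans (r i) (w i) (r (i + 1))) (N m : ℕ) : r m ∈ (bpSeq B w r N m).1 := by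
  induction m with
  | zero => simp [bpSeq]
  | succ m ih =>
    rcases Nat.lt_or_ge m N with h | h
    · simp [bpSeq_of_le B w r (show m + 1 ≤ N from h)]
    · rw [bpSeq_succ B w r h, bpStep_fst]
      exact ⟨r m, ih, hr m⟩

lemma bpSeq_snd_subset {B : NBAm σ Q} (hacc : ∀ q a q', B.accept q a q' → B.trans q a q')
    (w : ℕ → σ) (r : ℕ → Q) (N m : ℕ) : (bpSeq B w r N m).2 ⊆ (bpSeq B w r N m).1 := by
  induction m with
  | zero => simp [bpSeq]
  | succ m ih =>
    rcases Nat.lt_or_ge m N with h | h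
    · simp [bpSeq_of_le B w r (show m + 1 ≤ N from h)]
    · rw [bpSeq_succ B w r h]
      unfold bpStep
      split_ifs
      · exact Set.empty_subset _
      · rintro q' (hq' | ⟨q, hq, ha⟩)
        · exact deltaS_mono B ih _ hq'
        · exact ⟨q, hq, hacc _ _ _ ha⟩

/-- For a suitable starting time, the breakpoint run started on the accepting run `r` has
infinitely many breakpoints. -/
lemma exists_bpSeq_frequently [Finite Q] {B : NBAm σ Q}
    (hacc : ∀ q a q', B.accept q a q' → B.trans q a q') {w : ℕ → σ} {r : ℕ → Q}
    (hr : ∀ i, B.trans (r i) (w i) (r (i + 1))) (hinf : B.AccInf w r) :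
    ∃ N, 1 ≤ N ∧ ∀ n, ∃ m, n ≤ m ∧
      (rawB B (bpSeq B w r N m) (w m)).1 = (rawB B (bpSeq B w r N m) (w m)).2 := by
  classical
  have hex : ∃ k, ∃ N, 1 ≤ N ∧ ∀ n, ∃ m, n ≤ m ∧ (bpSeq B w r N m).1.ncard ≤ k :=
    ⟨Nat.card Q, 1, le_rfl, fun n => ⟨n, le_rfl, Set.ncard_le_card _⟩⟩
  obtain ⟨N, hN, hfreq⟩ := Nat.find_spec hex
  refine ⟨N, hN, ?_⟩
  by_contra! hcon
  obtain ⟨n, hn⟩ := hcon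
  obtain ⟨i, hi, hai⟩ := hinf (max n N)
  have hstep : ∀ m, i ≤ m → bpSeq B w r N (m + 1) = rawB B (bpSeq B w r N m) (w m) := by
    intro m hm
    rw [bpSeq_succ B w r (by omega), bpStep, if_neg (hn m (by omega))]
  have hsub : ∀ m, i + 1 ≤ m → (bpSeq B w r (i + 1) m).1 ⊆ (bpSeq B w r N m).2 := by
    intro m hm
    induction m, hm using Nat.le_induction with
    | base =>
      rw [bpSeq_of_le B w r le_rfl, hstep i le_rfl]
      rintro _ rfl
      exact .inr ⟨r i, mem_bpSeq hr N i, hai⟩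
    | succ m hm ih =>
      rw [bpSeq_succ B w r hm, bpStep_fst, hstep m (by omega)]
      exact (deltaS_mono B ih _).trans Set.subset_union_left
  have hssub : ∀ m, i + 1 ≤ m → (bpSeq B w r N m).2 ⊂ (bpSeq B w r N m).1 := by
    intro m hm
    refine (bpSeq_snd_subset hacc w r N m).ssubset_of_ne fun heq => ?_
    obtain ⟨m, rfl⟩ : ∃ m', m = m' + 1 := ⟨m - 1, by omega⟩
    rw [hstep m (by omega)] at heq
    exact hn m (by omega) heq.symm
  have hlt : ∀ m, i + 1 ≤ m →
      (bpSeq B w r (i + 1) m).1.ncard < (bpSeq B w r N m).1.ncard := fun m hm =>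
    Set.ncard_lt_ncard ((hsub m hm).trans_ssubset (hssub m hm)) (Set.toFinite _)
  have hpos : 0 < Nat.find hex := by
    obtain ⟨m, hm, hle⟩ := hfreq (i + 1)
    have := hlt m hm
    omega
  refine Nat.find_min hex (Nat.sub_lt hpos one_pos) ⟨i + 1, by omega, fun n' => ?_⟩
  obtain ⟨m, hm, hle⟩ := hfreq (max n' (i + 1))
  have := hlt m (by omega)
  exact ⟨m, by omega, by omega⟩

/-- The run of the subset construction. -/
def subsetSeq (B : NBAm σ Q) (w : ℕ → σ) : ℕ → Set Q
  | 0 => B.init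
  | m + 1 => deltaS B (subsetSeq B w m) (w m)

lemma mem_subsetSeq {B : NBAm σ Q} {w : ℕ → σ} {r : ℕ → Q} (hr : B.IsRun w r) (m : ℕ) :
    r m ∈ subsetSeq B w m := by
  induction m with
  | zero => exact hr.1
  | succ m ih => exact ⟨r m, ih, hr.2 m⟩

lemma lang_subset_ldba [Finite Q] (B : NBAm σ Q)
    (hacc : ∀ q a q', B.accept q a q' → B.trans q a q') : B.Lang ⊆ (ldba B).Lang := by
  rintro w ⟨r, hr, hinf⟩
  obtain ⟨N, hN, hfreq⟩ := exists_bpSeq_frequently hacc hr.2 hinf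
  have hne : ∀ m, N ≤ m → (rawB B (bpSeq B w r N m) (w m)).1 ≠ ∅ := fun m _ =>
    Set.nonempty_iff_ne_empty.1 ⟨r (m + 1), r m, mem_bpSeq hr.2 N m, hr.2 m⟩
  let x : ℕ → Set Q ⊕ Set Q × Set Q := fun i =>
    if i < N then Sum.inl (subsetSeq B w i) else Sum.inr (bpSeq B w r N i)
  have hxl : ∀ i, i < N → x i = Sum.inl (subsetSeq B w i) := fun i hi => if_pos hi
  have hxr : ∀ i, N ≤ i → x i = Sum.inr (bpSeq B w r N i) := fun i hi => if_neg (by omega)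
  refine ⟨x, ⟨hxl 0 hN, fun i => ?_⟩, fun n => ?_⟩
  · rcases lt_trichotomy (i + 1) N with h | h | h
    · rw [hxl i (by omega), hxl (i + 1) h]
      exact rfl
    · rw [hxl i (by omega), hxr (i + 1) h.ge, bpSeq_of_le B w r h.le]
      refine ⟨rfl, Set.singleton_ne_empty _, ?_⟩
      exact Set.singleton_subset_iff.2 (mem_subsetSeq hr (i + 1))
    · rw [hxr i (by omega), hxr (i + 1) h.le, bpSeq_succ B w r (by omega)]
      refine ⟨hne i (by omega), ?_⟩
      by_cases heq : (rawB B (bpSeq B w r N i) (w i)).1 = (rawB B (bpSeq B w r N i) (w i)).2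
      · exact .inr ⟨heq, if_pos heq⟩
      · exact .inl ⟨heq, if_neg heq⟩
  · obtain ⟨m, hm, heq⟩ := hfreq (max n N)
    refine ⟨m, by omega, ?_⟩
    rw [hxr m (by omega), hxr (m + 1) (by omega), bpSeq_succ B w r (by omega)]
    exact ⟨hne m (by omega), heq, if_pos heq⟩

/-- The limit-deterministic automaton obtained from `B` by the
combined subset and breakpoint construction recognizes the same language as
`B`. (As usual, the accepting transitions of `B` are transitions of `B`.) -/
theorem ldba_lang_eq {σ Q : Type} [Fintype σ] [Fintype Q] (B : NBAm σ Q)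
    (hacc : ∀ q a q', B.accept q a q' → B.trans q a q') :
    (ldba B).Lang = B.Lang :=
  (ldba_lang_subset B hacc).antisymm (lang_subset_ldba B hacc)
end

section
/- Let B = (Σ, Q, Q0, Δ, Γ) be a nondeterministic Büchi automaton and let S = (Σ, 3^Q, (Q0, ∅), ndet(δ_B) ∪ ndet(γ_{2,1}), ndet(γ_B) ∪ ndet(γ_{2,1})) be the slim automaton constructed from B. Then S is language equivalent to B: L(S) = L(B). -/
variable {σ Q : Type}

open CategoryTheory in
/-- Kőnig's lemma for a sequence of nonempty subsets of a finite type in which every element of a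
level has a `P`-predecessor in the level before. -/
theorem konig {Q : Type} [Finite Q] (S : ℕ → Set Q) (P : ℕ → Q → Q → Prop)
    (hne : ∀ i, (S i).Nonempty)
    (hP : ∀ i, ∀ q' ∈ S (i + 1), ∃ q ∈ S i, P i q q') :
    ∃ x : ℕ → Q, ∀ i, x i ∈ S i ∧ P i (x i) (x (i + 1)) := by
  choose f hfS hfP using hP
  let F : ℕᵒᵖ ⥤ Type := Functor.ofOpSequence (X := fun i => (S i : Type))
    (fun i => ↾(fun q => ⟨f i q.1 q.2, hfS i q.1 q.2⟩))
  have hfin : ∀ j, Finite (F.obj j) := fun j => inferInstanceAs (Finite (S j.unop))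
  have hnon : ∀ j, Nonempty (F.obj j) := fun j => (hne j.unop).to_subtype
  obtain ⟨s, hs⟩ := nonempty_sections_of_finite_inverse_system F
  let y : ∀ i, S i := fun i => s ⟨i⟩
  refine ⟨fun i => (y i).1, fun i => ⟨(y i).2, ?_⟩⟩
  have h := hs (homOfLE (Nat.le_add_right i 1)).op
  have h2 : f i (y (i + 1)).1 (y (i + 1)).2 = (y i).1 := by
    rw [Functor.ofOpSequence_map_homOfLE_succ] at h
    exact congrArg Subtype.val h
  have h3 := hfP i (y (i + 1)).1 (y (i + 1)).2
  rwa [h2] at h3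

/-- The step `q → q'` of `B` witnesses that `q'` occurs after the transition `p → p'` of the slim
automaton: if `q'` has to have seen an accepting transition, then `q` has seen one already or the
step itself is accepting. -/
def IsWitness (B : NBAm σ Q) (a : σ) (p p' : Set Q × Set Q) (q q' : Q) : Prop :=
  B.trans q a q' ∧
    (q' ∈ p'.2 ∨ (slim B).accept p a p' → q ∈ p.2 ∨ B.accept q a q')

theorem slim_accept_eq {B : NBAm σ Q} {a : σ} {p p' : Set Q × Set Q}
    (h : (slim B).accept p a p') : p' = ((rawB B p a).2, ∅) := by
  rcases h with ⟨-, h1, h2⟩ | ⟨-, h2⟩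
  · rw [h2, h1]
  · exact h2

theorem slim_trans_cases {B : NBAm σ Q} {a : σ} {p p' : Set Q × Set Q}
    (h : (slim B).trans p a p') : (slim B).accept p a p' ∨ p' = rawB B p a := by
  rcases h with ⟨h0, ⟨-, h1⟩ | ⟨h1, h2⟩⟩ | h
  · exact Or.inr h1
  · exact Or.inl (Or.inl ⟨h0, h1, h2⟩)
  · exact Or.inl (Or.inr h)

theorem slim_trans_nonempty {B : NBAm σ Q} {a : σ} {p p' : Set Q × Set Q}
    (h : (slim B).trans p a p') : p'.1.Nonempty := by
  rw [Set.nonempty_iff_ne_empty]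
  rcases h with ⟨h0, ⟨-, rfl⟩ | ⟨-, rfl⟩⟩ | ⟨h0, rfl⟩ <;> exact h0

theorem rawB_snd_subset {B : NBAm σ Q} (hacc : ∀ q a q', B.accept q a q' → B.trans q a q')
    {p : Set Q × Set Q} (hp : p.2 ⊆ p.1) (a : σ) : (rawB B p a).2 ⊆ (rawB B p a).1 := by
  rintro q' (⟨q, hq, ht⟩ | ⟨q, hq, ht⟩)
  · exact ⟨q, hp hq, ht⟩
  · exact ⟨q, hq, hacc _ _ _ ht⟩

theorem slim_trans_subset {B : NBAm σ Q} (hacc : ∀ q a q', B.accept q a q' → B.trans q a q')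
    {a : σ} {p p' : Set Q × Set Q} (hp : p.2 ⊆ p.1) (h : (slim B).trans p a p') :
    p'.2 ⊆ p'.1 := by
  rcases slim_trans_cases h with h | rfl
  · rw [slim_accept_eq h]
    exact Set.empty_subset _
  · exact rawB_snd_subset hacc hp a

theorem exists_isWitness {B : NBAm σ Q} (hacc : ∀ q a q', B.accept q a q' → B.trans q a q')
    {a : σ} {p p' : Set Q × Set Q} (hp : p.2 ⊆ p.1) (h : (slim B).trans p a p')
    {q' : Q} (hq' : q' ∈ p'.1) : ∃ q ∈ p.1, IsWitness B a p p' q q' := by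
  by_cases hR : q' ∈ (rawB B p a).2
  · rcases hR with ⟨q, hq, ht⟩ | ⟨q, hq, ht⟩
    · exact ⟨q, hp hq, ht, fun _ => Or.inl hq⟩
    · exact ⟨q, hq, hacc _ _ _ ht, fun _ => Or.inr ht⟩
  -- Outside `R'` only a non-accepting transition is possible, and nothing has to be witnessed.
  · have hna : ¬ (slim B).accept p a p' := fun h' => by
      rw [slim_accept_eq h'] at hq'
      exact hR hq'
    obtain rfl := (slim_trans_cases h).resolve_left hna
    obtain ⟨q, hq, ht⟩ := hq'
    exact ⟨q, hq, ht, fun h' => (h'.elim hR hna).elim⟩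

theorem mem_lang_of_slim [Finite Q] {B : NBAm σ Q}
    (hacc : ∀ q a q', B.accept q a q' → B.trans q a q') {w : ℕ → σ}
    (hw : w ∈ (slim B).Lang) : w ∈ B.Lang := by
  obtain ⟨p, ⟨h0, ht⟩, hinf⟩ := hw
  have hsub : ∀ i, (p i).2 ⊆ (p i).1 := by
    intro i
    induction i with
    | zero =>
      rw [h0]
      exact Set.empty_subset _
    | succ i ih => exact slim_trans_subset hacc ih (ht i)
  have hpred : ∀ i, ∀ q' ∈ (p (i + 1)).1,
      ∃ q ∈ (p i).1, IsWitness B (w i) (p i) (p (i + 1)) q q' :=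
    fun i q' hq' => exists_isWitness hacc (hsub i) (ht i) hq'
  have hne : ∀ i, (p i).1.Nonempty := by
    rintro (_ | i)
    · obtain ⟨q', hq'⟩ := slim_trans_nonempty (ht 0)
      obtain ⟨q, hq, -⟩ := hpred 0 q' hq'
      exact ⟨q, hq⟩
    · exact slim_trans_nonempty (ht i)
  obtain ⟨r, hr⟩ := konig _ _ hne hpred
  refine ⟨r, ⟨?_, fun i => (hr i).2.1⟩, ?_⟩
  · have h := (hr 0).1
    rw [h0] at h
    exact h
  · intro n
    by_contra! hno
    obtain ⟨k, hnk, hk⟩ := hinf n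
    have hout : ∀ i, k + 1 ≤ i → r i ∉ (p i).2 := by
      intro i hi
      induction i, hi using Nat.le_induction with
      | base =>
        rw [slim_accept_eq hk]
        exact Set.notMem_empty _
      | succ i hi ih =>
        intro hmem
        exact ((hr i).2.2 (Or.inl hmem)).elim ih (hno i (by omega))
    obtain ⟨m, hkm, hm⟩ := hinf (k + 1)
    exact ((hr m).2.2 (Or.inr hm)).elim (hout m hkm) (hno m (by omega))

open Classical in
/-- The run of the slim automaton that follows a run `r` of `B`: it promotes the second component
exactly when this keeps the current state of `r`. -/
noncomputable def follow (B : NBAm σ Q) (w : ℕ → σ) (r : ℕ → Q) : ℕ → Set Q × Set Q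
  | 0 => (B.init, ∅)
  | i + 1 =>
    if r (i + 1) ∈ (rawB B (follow B w r i) (w i)).2 then
      ((rawB B (follow B w r i) (w i)).2, ∅)
    else rawB B (follow B w r i) (w i)

theorem mem_slim_lang {B : NBAm σ Q} {w : ℕ → σ} (hw : w ∈ B.Lang) : w ∈ (slim B).Lang := by
  obtain ⟨r, ⟨h0, ht⟩, hinf⟩ := hw
  have hmem : ∀ i, r i ∈ (follow B w r i).1 := by
    intro i
    induction i with
    | zero => exact h0
    | succ i ih =>
      rw [follow]
      split_ifs with h
      · exact h
      · exact ⟨r i, ih, ht i⟩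
  have hprom : ∀ i, r (i + 1) ∈ (rawB B (follow B w r i) (w i)).2 →
      gamma21 B (follow B w r i) (w i) (follow B w r (i + 1)) := by
    intro i h
    refine ⟨Set.nonempty_iff_ne_empty.mp ⟨_, h⟩, ?_⟩
    rw [follow, if_pos h]
    rfl
  refine ⟨follow B w r, ⟨rfl, fun i => ?_⟩, fun n => ?_⟩
  · by_cases h : r (i + 1) ∈ (rawB B (follow B w r i) (w i)).2
    · exact Or.inr (hprom i h)
    · have hR : r (i + 1) ∈ (rawB B (follow B w r i) (w i)).1 := ⟨r i, hmem i, ht i⟩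
      refine Or.inl ⟨Set.nonempty_iff_ne_empty.mp ⟨_, hR⟩, Or.inl ⟨fun he => h (he ▸ hR), ?_⟩⟩
      rw [follow, if_neg h]
  · obtain ⟨i, hi, hai⟩ := hinf n
    exact ⟨i, hi, Or.inr (hprom i (Or.inr ⟨r i, hmem i, hai⟩))⟩

/-- The slim automaton is language equivalent to `B`:
`L(S) = L(B)`. -/
theorem slim_lang_eq {σ Q : Type} [Fintype σ] [Fintype Q] (B : NBAm σ Q)
    (hacc : ∀ q a q', B.accept q a q' → B.trans q a q') :
    (slim B).Lang = B.Lang := by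
  exact Set.Subset.antisymm (fun _ hw => mem_lang_of_slim hacc hw) fun _ hw => mem_slim_lang hw
end

section
/- For every nondeterministic Büchi automaton A over alphabet Σ, every finite MDP M over Σ, and every state s of M, the syntactic satisfaction probability is at most the semantic satisfaction probability: PSat^M_A(s) ≤ PSemSat^M_A(s). -/
open scoped ENNReal
open MeasureTheory

attribute [local instance] Classical.propDecidable

/-- All our state and action spaces are finite: equip every product type with
the discrete σ-algebra, so that spaces of infinite runs carry the product
(cylinder) σ-algebra. -/
instance (X Y : Type) : MeasurableSpace (X × Y) := ⊤

/-- A Markov decision process with alphabet `σ`, states `S` and actions `Act`.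
`avail s` is the (nonempty) set of actions available in `s`, `T` the
probabilistic transition function and `label` the labelling of transitions. -/
structure MDP (σ S Act : Type) where
  avail : S → Set Act
  avail_nonempty : ∀ s, (avail s).Nonempty
  T : S → Act → PMF S
  label : S → Act → S → σ

/-- A (history-dependent, randomized) strategy: a distribution over actions,
given the past state-action pairs and the current state. -/
def Strategy (S Act : Type) : Type := List (S × Act) → S → PMF Act

/-- A strategy only uses available actions. -/
def ValidStrategy {S Act : Type} (avail : S → Set Act) (φ : Strategy S Act) : Prop :=
  ∀ h s, (φ h s).support ⊆ avail s

/-- `preProb T φ hist s v` is the probability, having started at state `s` with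
past history `hist`, that the next steps produce exactly the finite sequence
`v` of state–action pairs (each entry pairing the visited state with the action
chosen there). -/
noncomputable def preProb {S Act : Type} (T : S → Act → PMF S) (φ : Strategy S Act) :
    List (S × Act) → S → List (S × Act) → ℝ≥0∞
  | _, _, [] => 1
  | hist, s, (t, a) :: rest =>
      (if t = s then (1 : ℝ≥0∞) else 0) * φ hist s a *
        ∑' s' : S, T s a s' * preProb T φ (hist ++ [(s, a)]) s' rest

/-- The cylinder of all infinite runs extending the finite sequence `v`. -/
def cylinder {S Act : Type} (v : List (S × Act)) : Set (ℕ → S × Act) :=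
  {ω | ∀ i : Fin v.length, ω i = v.get i}

/-- `μ` is the probability measure on infinite runs (sequences of state–action
pairs) induced, via the Ionescu–Tulcea construction, by the transition function
`T` and the strategy `φ` from initial state `s`: it is a probability measure
whose cylinder probabilities are the prescribed ones. -/
def IsRunMeasure {S Act : Type} (T : S → Act → PMF S) (φ : Strategy S Act) (s : S)
    (μ : Measure (ℕ → S × Act)) : Prop :=
  IsProbabilityMeasure μ ∧ ∀ v : List (S × Act), μ (cylinder v) = preProb T φ [] s v

/-- The labelling of an infinite run of an MDP: an infinite word. -/
def MDPLabel {σ S Act : Type} (M : MDP σ S Act) (ω : ℕ → S × Act) : ℕ → σ :=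
  fun n => M.label (ω n).1 (ω n).2 (ω (n + 1)).1

/-- Semantic satisfaction probability `PSemSat^M_A(s)`: the optimal probability
that the label of a run of `M` from `s` belongs to the language of `A`. -/
noncomputable def PSemSat {σ S Act Q : Type} (M : MDP σ S Act) (A : NBA σ Q) (s : S) : ℝ≥0∞ :=
  ⨆ (φ : Strategy S Act) (_ : ValidStrategy M.avail φ)
    (μ : Measure (ℕ → S × Act)) (_ : IsRunMeasure M.T φ s μ),
      μ {ω | MDPLabel M ω ∈ A.Lang}

/-- The transition function of the product MDP `M × A`.  Its states are the
pairs of an `M`-state and an `A`-state, together with a dead state `none`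
absorbing the probability mass `T×` assigns to no successor (the "0 otherwise"
case of the sub-stochastic product transition function); an action picks an
action of `M` together with a successor state of `A`. -/
noncomputable def prodT {σ S Act Q : Type} (M : MDP σ S Act) (A : NBA σ Q) :
    Option (S × Q) → Act × Q → PMF (Option (S × Q))
  | none, _ => PMF.pure none
  | some (s, q), (a, q') =>
      (M.T s a).bind fun s' =>
        PMF.pure (if A.trans q (M.label s a s') q' then some (s', q') else none)

/-- Available actions of the product MDP. -/
def prodAvail {σ S Act Q : Type} (M : MDP σ S Act) (A : NBA σ Q) :
    Option (S × Q) → Set (Act × Q)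
  | none => Set.univ
  | some (s, _) => {aq | aq.1 ∈ M.avail s}

/-- The `i`-th step of the product run `ω` is an accepting transition of the
product (a transition in `Γ×`). -/
def AccStep {σ S Act Q : Type} (M : MDP σ S Act) (A : NBA σ Q)
    (ω : ℕ → Option (S × Q) × (Act × Q)) (i : ℕ) : Prop :=
  ∃ s q a q' s',
    (ω i).1 = some (s, q) ∧ (ω i).2 = (a, q') ∧ (ω (i + 1)).1 = some (s', q') ∧
    A.accept q (M.label s a s') q' ∧ 0 < M.T s a s'

/-- Syntactic satisfaction probability `PSat^M_A(s)`: the optimal probability,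
in the product MDP `M × A` started in `(s, q₀)`, of taking accepting product
transitions infinitely often. -/
noncomputable def PSat {σ S Act Q : Type} (M : MDP σ S Act) (A : NBA σ Q) (s : S) : ℝ≥0∞ :=
  ⨆ (ψ : Strategy (Option (S × Q)) (Act × Q)) (_ : ValidStrategy (prodAvail M A) ψ)
    (μ : Measure (ℕ → Option (S × Q) × (Act × Q)))
    (_ : IsRunMeasure (prodT M A) ψ (some (s, A.init)) μ),
      μ {ω | ∀ n, ∃ i, n ≤ i ∧ AccStep M A ω i}

/-- `A` is good-for-MDPs: syntactic and semantic satisfaction probabilities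
coincide for every finite MDP. -/
def NBA.GFM {σ Q : Type} (A : NBA σ Q) : Prop :=
  ∀ (S Act : Type) [Fintype S] [Fintype Act] (M : MDP σ S Act) (s0 : S),
    PSat M A s0 = PSemSat M A s0

/-! ### Prefixes, cylinders and comparison of measures -/

section Aux
variable {X : Type}

/-- The prefix of length `n` of the infinite sequence `ω`. -/
def pre (ω : ℕ → X) (n : ℕ) : List X := (List.range n).map ω

@[simp] lemma pre_length (ω : ℕ → X) (n : ℕ) : (pre ω n).length = n := by simp [pre]
@[simp] lemma pre_zero (ω : ℕ → X) : pre ω 0 = [] := rfl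
lemma pre_succ (ω : ℕ → X) (n : ℕ) : pre ω (n+1) = pre ω n ++ [ω n] := by
  simp [pre, List.range_succ]

lemma mem_cylinder_iff {S Act : Type} (v : List (S × Act)) (ω : ℕ → S × Act) :
    ω ∈ cylinder v ↔ pre ω v.length = v := by
  constructor
  · intro h
    apply List.ext_getElem (by simp)
    intro i h1 h2
    simpa [pre] using h ⟨i, h2⟩
  · intro h i
    have : (pre ω v.length)[i.1]'(by simp) = v[i.1] := by simp only [h]
    simpa [pre] using this

lemma pre_mem_cylinder {S Act : Type} (ω : ℕ → S × Act) (n : ℕ) : ω ∈ cylinder (pre ω n) := by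
  rw [mem_cylinder_iff, pre_length]

lemma measurable_cylinder {S Act : Type} (v : List (S × Act)) : MeasurableSet (cylinder v) := by
  have : cylinder v = ⋂ i : Fin v.length, (fun ω : ℕ → S × Act => ω i) ⁻¹' {v.get i} := by
    ext ω; simp [_root_.cylinder]
  rw [this]
  exact MeasurableSet.iInter fun i => measurable_pi_apply (i : ℕ) (MeasurableSpace.measurableSet_top)

lemma cylinder_disjoint {S Act : Type} {v w : List (S × Act)} (hl : v.length = w.length)
    (h : v ≠ w) : Disjoint (cylinder v) (cylinder w) := by
  rw [Set.disjoint_left]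
  intro ω h1 h2
  rw [mem_cylinder_iff] at h1 h2
  exact h (by rw [← h1, ← h2, hl])

lemma measure_cylinder_union {S Act : Type} [Finite S] [Finite Act] (μ : Measure (ℕ → S × Act))
    (G : Set (List (S × Act))) (n : ℕ) (hG : ∀ v ∈ G, v.length = n) :
    μ {ω | pre ω n ∈ G} = ∑' v : G, μ (cylinder (v : List (S × Act))) := by
  have : {ω : ℕ → S × Act | pre ω n ∈ G} = ⋃ v : G, cylinder (v : List (S × Act)) := by
    ext ω
    simp only [Set.mem_ofPred_eq, Set.mem_iUnion, mem_cylinder_iff]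
    constructor
    · intro h; exact ⟨⟨_, h⟩, by simp⟩
    · rintro ⟨v, hv⟩
      rw [hG _ v.2] at hv
      rw [hv]; exact v.2
  rw [this, measure_iUnion]
  · intro v w h
    exact cylinder_disjoint (by rw [hG _ v.2, hG _ w.2]) (fun h' => h (Subtype.ext h'))
  · intro v; exact measurable_cylinder _

/-- Domination on cylinders implies domination on all sets, measurable or not. An open set is the
increasing union over `n` of the disjoint unions of the length-`n` cylinders it contains, and the
general case follows from outer regularity of `ν`. -/
theorem measure_le_of_cylinder {S Act : Type} [Finite S] [Finite Act]
    (μ ν : Measure (ℕ → S × Act)) [IsFiniteMeasure ν]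
    (h : ∀ v, μ (cylinder v) ≤ ν (cylinder v)) (B : Set (ℕ → S × Act)) : μ B ≤ ν B := by
  let _ : TopologicalSpace (S × Act) := ⊥
  have : DiscreteTopology (S × Act) := ⟨rfl⟩
  have : BorelSpace (S × Act) := ⟨borel_eq_top_of_discrete.symm⟩
  have key : ∀ U : Set (ℕ → S × Act), IsOpen U → μ U ≤ ν U := by
    intro U hU
    have hUn : U = ⋃ n, {ω | pre ω n ∈ {v : List (S × Act) | v.length = n ∧ _root_.cylinder v ⊆ U}} := by
      ext ω
      simp only [Set.mem_iUnion, Set.mem_ofPred_eq]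
      constructor
      · intro hω
        obtain ⟨I, u, hu, hsub⟩ := isOpen_pi_iff.1 hU ω hω
        refine ⟨I.sup id + 1, by simp, fun ω' hω' => hsub fun i hi => ?_⟩
        have hi' : i < I.sup id + 1 := Nat.lt_succ_of_le (Finset.le_sup (f := id) hi)
        rw [mem_cylinder_iff, pre_length] at hω'
        have : ω' i = ω i := by
          simp only [pre, List.map_inj_left, List.mem_range] at hω'
          exact hω' i hi'
        rw [this]; exact (hu i hi).2
      · rintro ⟨n, -, hn⟩
        exact hn (pre_mem_cylinder _ _)
    have hmono : Monotone fun n => {ω : ℕ → S × Act | pre ω n ∈ {v : List (S × Act) | v.length = n ∧ _root_.cylinder v ⊆ U}} := by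
      apply monotone_nat_of_le_succ
      rintro n ω ⟨-, h2⟩
      refine ⟨by simp, fun ω' hω' => h2 ?_⟩
      rw [mem_cylinder_iff, pre_length] at hω' ⊢
      rw [pre_succ, pre_succ] at hω'
      exact List.append_inj_left' hω' rfl
    rw [hUn, hmono.measure_iUnion, hmono.measure_iUnion]
    refine iSup_mono fun n => ?_
    rw [measure_cylinder_union _ _ n (fun v hv => hv.1), measure_cylinder_union _ _ n (fun v hv => hv.1)]
    exact ENNReal.tsum_le_tsum fun v => h _
  rw [B.measure_eq_iInf_isOpen ν]
  refine le_iInf₂ fun U hBU => le_iInf fun hU => (measure_mono hBU).trans (key U hU)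

end Aux

/-! ### Cylinder probabilities and existence of the run measure -/

section Run
variable {S Act : Type}

/-- The distribution of the state reached after the history `v` of a run started in `s`: the point
mass at `s` for the empty history, and `T` at the last state–action pair otherwise. -/
noncomputable def nextState (T : S → Act → PMF S) (s : S) (v : List (S × Act)) : PMF S :=
  match v.getLast? with
  | none => PMF.pure s
  | some p => T p.1 p.2

@[simp] lemma nextState_nil (T : S → Act → PMF S) (s : S) : nextState T s [] = PMF.pure s := rfl
@[simp] lemma nextState_snoc (T : S → Act → PMF S) (s : S) (v : List (S × Act)) (p) :
    nextState T s (v ++ [p]) = T p.1 p.2 := by simp [nextState]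

/-- `preProb` is defined by recursion on the first step; this is the recursion on the last step. -/
lemma preProb_snoc (T : S → Act → PMF S) (φ : Strategy S Act) (hist : List (S × Act)) (s : S)
    (v : List (S × Act)) (p : S × Act) :
    preProb T φ hist s (v ++ [p]) =
      preProb T φ hist s v * (nextState T s v p.1 * φ (hist ++ v) p.1 p.2) := by
  obtain ⟨t, b⟩ := p
  induction v generalizing hist s with
  | nil =>
    simp only [List.nil_append, preProb, nextState_nil, PMF.pure_apply, mul_one, List.append_nil,
      PMF.tsum_coe, one_mul]
    split_ifs with h
    · subst h; rfl
    · simp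
  | cons x r ih =>
    obtain ⟨s0, a0⟩ := x
    simp only [List.cons_append, preProb]
    by_cases h : s0 = s
    swap
    · simp [h]
    subst h
    simp only [ih, List.append_assoc, List.singleton_append]
    rcases List.eq_nil_or_concat r with rfl | ⟨r', y, rfl⟩
    · have := nextState_snoc T s0 [] (s0, a0)
      simp only [List.nil_append] at this
      simp only [preProb, this, nextState_nil, PMF.pure_apply, mul_one, PMF.tsum_coe, one_mul]
      rw [tsum_eq_single t]
      · simp
      · intro s' hs'; simp [Ne.symm hs']
    · have h2 : nextState T s0 ((s0, a0) :: (r'.concat y)) = T y.1 y.2 := by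
        have := nextState_snoc T s0 ((s0,a0) :: r') y
        simpa using this
      have h3 : ∀ s', nextState T s' (r'.concat y) = T y.1 y.2 := by
        intro s'; simp
      simp only [h2, h3, ← mul_assoc]
      rw [ENNReal.tsum_mul_right, ENNReal.tsum_mul_right]
      simp only [mul_assoc]

/-- The distribution of the next state–action pair after the history `h`. -/
noncomputable def stepPMF (T : S → Act → PMF S) (φ : Strategy S Act) (s : S)
    (h : List (S × Act)) : PMF (S × Act) :=
  (nextState T s h).bind fun t => (φ h t).map fun a => (t, a)

lemma stepPMF_apply (T : S → Act → PMF S) (φ : Strategy S Act) (s : S)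
    (h : List (S × Act)) (p : S × Act) :
    stepPMF T φ s h p = nextState T s h p.1 * φ h p.1 p.2 := by
  obtain ⟨t, b⟩ := p
  simp only [stepPMF, PMF.bind_apply, PMF.map_apply]
  rw [tsum_eq_single t]
  · congr 1
    rw [tsum_eq_single b]
    · simp
    · intro b' hb'; simp [Ne.symm hb']
  · intro t' ht'; simp [Ne.symm ht']

lemma preProb_eq_prod (T : S → Act → PMF S) (φ : Strategy S Act) (s : S) (v : List (S × Act)) :
    preProb T φ [] s v = ∏ i : Fin v.length, stepPMF T φ s (v.take i) (v.get i) := by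
  induction v using List.reverseRecOn with
  | nil => simp [preProb]
  | append_singleton v p ih =>
    rw [preProb_snoc, ih]
    have : ∀ (n : ℕ) (hn : n = (v ++ [p]).length),
      ∏ i : Fin (v ++ [p]).length, stepPMF T φ s ((v ++ [p]).take i) ((v ++ [p]).get i)
       = ∏ i : Fin n, stepPMF T φ s ((v ++ [p]).take i) ((v ++ [p])[i.1]'(hn ▸ i.2)) := by
      intro n hn; subst hn; rfl
    rw [this (v.length + 1) (by simp), Fin.prod_univ_castSucc]
    congr 1
    · refine Finset.prod_congr rfl fun i _ => ?_
      have : i.1 ≤ v.length := i.2.le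
      simp [List.take_append_of_le_length this]
    · simp [stepPMF_apply]

/-- Given a choice `c h` of continuation for every finite history `h`, the history of length `n`
obtained by following these choices. -/
def histOf {X : Type} (c : List X → X) : ℕ → List X
  | 0 => []
  | n + 1 => histOf c n ++ [c (histOf c n)]

/-- The infinite sequence obtained by following the choices `c`. -/
def runOf {X : Type} (c : List X → X) (n : ℕ) : X := c (histOf c n)

lemma pre_runOf {X : Type} (c : List X → X) (n : ℕ) : pre (runOf c) n = histOf c n := by
  induction n with
  | zero => rfl
  | succ n ih => rw [pre_succ, ih]; rfl

lemma histOf_eq_iff {X : Type} (c : List X → X) (v : List X) :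
    histOf c v.length = v ↔ ∀ i : Fin v.length, c (v.take i) = v.get i := by
  have hlen : ∀ n, (histOf c n).length = n := fun n => by rw [← pre_runOf]; simp
  induction v using List.reverseRecOn with
  | nil => simp [histOf]
  | append_singleton v p ih =>
    have h1 : histOf c (v ++ [p]).length = v ++ [p] ↔ histOf c v.length = v ∧ c v = p := by
      simp only [List.length_append, List.length_singleton, histOf]
      constructor
      · intro h
        have := List.append_inj' h rfl
        exact ⟨this.1, by simpa [this.1] using this.2⟩
      · rintro ⟨h, h'⟩; rw [h, h']
    refine h1.trans ((and_congr_left' ih).trans ?_)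
    constructor
    · rintro ⟨h, h'⟩ ⟨i, hi⟩
      by_cases hiv : i < v.length
      · simpa [List.take_append_of_le_length hiv.le, hiv] using h ⟨i, hiv⟩
      · have : i = v.length := by simp at hi; omega
        subst this; simpa using h'
    · intro h
      refine ⟨fun i => ?_, ?_⟩
      · have := h ⟨i, by simp⟩
        simpa [List.take_append_of_le_length i.2.le] using this
      · simpa using h ⟨v.length, by simp⟩

/-- Every strategy has a run measure. Draw a continuation independently for every finite history
`h`, according to `stepPMF T φ s h`, and follow these choices: the event that the resulting run
extends `v` fixes the choices at the finitely many proper prefixes of `v`, which are distinct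
coordinates, so its probability is the product of the step probabilities. -/
theorem exists_runMeasure [Finite S] [Finite Act] (T : S → Act → PMF S) (φ : Strategy S Act)
    (s : S) : ∃ ν, IsRunMeasure T φ s ν := by
  have : DiscreteMeasurableSpace (S × Act) := ⟨fun _ => MeasurableSpace.measurableSet_top⟩
  let K : List (S × Act) → Measure (S × Act) := fun h => (stepPMF T φ s h).toMeasure
  have : ∀ h, IsProbabilityMeasure (K h) := fun h => PMF.toMeasure.isProbabilityMeasure _
  have hset : ∀ v : List (S × Act), {c : List (S × Act) → S × Act | histOf c v.length = v} =
      Set.pi ((Finset.univ.image fun i : Fin v.length => v.take i : Finset (List (S × Act))) :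
        Set (List (S × Act))) (fun h => {x | v[h.length]? = some x}) := by
    intro v
    ext c
    rw [Set.mem_ofPred_eq, histOf_eq_iff]
    simp only [Set.mem_pi, Finset.coe_image, Finset.coe_univ, Set.image_univ, Set.mem_range,
      forall_exists_index, forall_apply_eq_imp_iff, Set.mem_ofPred_eq]
    refine forall_congr' fun i => ?_
    simp [eq_comm]
  have hmeas : ∀ v : List (S × Act),
      MeasurableSet {c : List (S × Act) → S × Act | histOf c v.length = v} := by
    intro v
    rw [hset]
    exact MeasurableSet.pi (Set.to_countable _) fun h _ => MeasurableSet.of_discrete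
  have hrun : Measurable (runOf : (List (S × Act) → S × Act) → ℕ → S × Act) := by
    refine measurable_pi_iff.2 fun n => measurable_to_countable' fun x => ?_
    have : (fun c : List (S × Act) → S × Act => runOf c n) ⁻¹' {x} =
        ⋃ v : {v : List (S × Act) // v.length = n},
          {c : List (S × Act) → S × Act | histOf c v.1.length = v.1} ∩
            (fun c => c v.1) ⁻¹' {x} := by
      ext c
      simp only [Set.mem_preimage, Set.mem_singleton_iff, Set.mem_iUnion, Set.mem_inter_iff,
        Set.mem_ofPred_eq]
      constructor
      · intro h
        have hl : (histOf c n).length = n := by rw [← pre_runOf]; simp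
        exact ⟨⟨histOf c n, hl⟩, by simp [hl], h⟩
      · rintro ⟨⟨v, rfl⟩, h1, h2⟩
        rw [runOf, h1]; exact h2
    rw [this]
    exact MeasurableSet.iUnion fun v => (hmeas _).inter
      (measurable_pi_apply v.1 MeasurableSet.of_discrete)
  refine ⟨(Measure.infinitePi K).map runOf, Measure.isProbabilityMeasure_map hrun.aemeasurable,
    fun v => ?_⟩
  rw [Measure.map_apply hrun (measurable_cylinder v)]
  have : runOf ⁻¹' cylinder v = {c : List (S × Act) → S × Act | histOf c v.length = v} := by
    ext c
    simp only [Set.mem_preimage, mem_cylinder_iff, pre_runOf, Set.mem_ofPred_eq]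
  rw [this, hset, Measure.infinitePi_pi _ (fun _ _ => MeasurableSet.of_discrete),
    preProb_eq_prod, Finset.prod_image]
  · refine Finset.prod_congr rfl fun i _ => ?_
    have : {x | v[(v.take i).length]? = some x} = {v.get i} := by
      ext x; simp [eq_comm]
    simp only [K, this]
    exact PMF.toMeasure_apply_singleton _ _ MeasurableSet.of_discrete
  · intro i _ j _ h
    have := congrArg List.length h
    simp only [List.length_take, min_eq_left i.2.le, min_eq_left j.2.le] at this
    exact Fin.ext this

/-- Almost surely, every state visited has positive probability given the preceding history. -/
lemma ae_step_pos [Finite S] [Finite Act] {T : S → Act → PMF S} {φ : Strategy S Act}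
    {s : S} {μ : Measure (ℕ → S × Act)} (hμ : IsRunMeasure T φ s μ) :
    ∀ᵐ ω ∂μ, ∀ n, nextState T s (pre ω n) (ω n).1 ≠ 0 := by
  rw [ae_all_iff]
  intro n
  rw [ae_iff]
  have hsub : {ω : ℕ → S × Act | ¬ nextState T s (pre ω n) (ω n).1 ≠ 0} ⊆
      ⋃ z : {z : List (S × Act) × (S × Act) // nextState T s z.1 z.2.1 = 0},
        cylinder (z.1.1 ++ [z.1.2]) := by
    intro ω hω
    simp only [Set.mem_ofPred_eq, not_not] at hω
    refine Set.mem_iUnion.2 ⟨⟨(pre ω n, ω n), hω⟩, ?_⟩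
    rw [← pre_succ]; exact pre_mem_cylinder _ _
  refine measure_mono_null hsub (measure_iUnion_null fun z => ?_)
  rw [hμ.2, preProb_snoc, z.2]; simp

end Run

/-! ### The strategy induced on the MDP by a product strategy -/

section Product
variable {σ Q S Act : Type}

/-- The projection of a product state–action pair to the MDP, with value `none` on the dead
state. -/
def projLive (p : Option (S × Q) × (Act × Q)) : Option (S × Act) :=
  p.1.map fun y => (y.1, p.2.1)

/-- The finite product histories that avoid the dead state and project to `v`. -/
def liveLifts (Q : Type) (v : List (S × Act)) : Set (List (Option (S × Q) × (Act × Q))) :=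
  {H | H.map projLive = v.map some}

lemma liveLifts_length {v : List (S × Act)} {H : List (Option (S × Q) × (Act × Q))}
    (h : H ∈ liveLifts Q v) : H.length = v.length := by
  simpa using congrArg List.length (h : H.map projLive = v.map some)

lemma liveLifts_snoc {v : List (S × Act)} {t : S} {a : Act}
    {H : List (Option (S × Q) × (Act × Q))} (h : H ∈ liveLifts Q (v ++ [(t, a)])) :
    ∃ H' ∈ liveLifts Q v, ∃ q q', H = H' ++ [(some (t, q), (a, q'))] := by
  rcases List.eq_nil_or_concat H with rfl | ⟨H', p, rfl⟩
  · simp [liveLifts] at h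
  · have h : (H'.concat p).map projLive = (v ++ [(t, a)]).map some := h
    simp only [List.concat_eq_append, List.map_append, List.map_cons, List.map_nil] at h
    have h' := List.append_inj' h rfl
    refine ⟨H', h'.1, ?_⟩
    obtain ⟨x, b, q'⟩ := p
    have h2 := h'.2
    cases x with
    | none => simp [projLive] at h2
    | some y =>
      obtain ⟨s1, q⟩ := y
      simp only [projLive, Option.map_some, List.cons.injEq, Option.some.injEq, Prod.mk.injEq,
        and_true] at h2
      obtain ⟨rfl, rfl⟩ := h2
      exact ⟨q, q', by simp⟩

lemma tsum_bind_pure_le (p : PMF S) (f : S → Option (S × Q)) (t : S)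
    (hf : ∀ s' q, f s' = some (t, q) → s' = t) :
    ∑' q : Q, (p.bind fun s' => PMF.pure (f s')) (some (t, q)) ≤ p t := by
  simp only [PMF.bind_apply]
  rw [ENNReal.tsum_comm, tsum_eq_single t]
  · rw [ENNReal.tsum_mul_left]
    have h1 : ∑' q : Q, PMF.pure (f t) (some (t, q)) ≤ 1 := by
      rw [← PMF.tsum_coe (PMF.pure (f t))]
      exact ENNReal.tsum_comp_le_tsum_of_injective (f := fun q : Q => some (t, q))
        (fun q q' h => by simpa using h) _
    exact (mul_le_mul_right h1 _).trans (mul_one _).le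
  · intro s' hs'
    refine ENNReal.tsum_eq_zero.2 fun q => ?_
    rw [PMF.pure_apply, if_neg, mul_zero]
    intro h; exact hs' (hf _ _ h.symm)

/-- After a live history the product moves to the `M`-state `t`, with any automaton state, with at
most the probability `M` does; the deficit is the mass going to the dead state. -/
lemma tsum_nextState_le (M : MDP σ S Act) (A : NBA σ Q) (s t : S) {v : List (S × Act)}
    {H : List (Option (S × Q) × (Act × Q))} (h : H ∈ liveLifts Q v) :
    ∑' q : Q, nextState (prodT M A) (some (s, A.init)) H (some (t, q)) ≤ nextState M.T s v t := by
  rcases List.eq_nil_or_concat v with rfl | ⟨v', p, rfl⟩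
  · have : H = [] := List.length_eq_zero_iff.1 (liveLifts_length h)
    subst this
    have := tsum_bind_pure_le (PMF.pure s) (fun s' => some (s', A.init)) t
      (by intro s' q h; simp at h; exact h.1)
    simpa [PMF.pure_bind] using this
  · rw [List.concat_eq_append] at h ⊢
    obtain ⟨H', -, q, q', rfl⟩ := liveLifts_snoc h
    rw [nextState_snoc]
    simp only [nextState_snoc]
    refine tsum_bind_pure_le (M.T p.1 p.2) _ t fun s' q1 h1 => ?_
    split_ifs at h1
    simp at h1; exact h1.1

/-- The probability that the product run stays alive during its first `v.length` positions and
projects to `v` there. -/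
noncomputable def liveProb (μ : Measure (ℕ → Option (S × Q) × (Act × Q)))
    (v : List (S × Act)) : ℝ≥0∞ := μ {ω | pre ω v.length ∈ liveLifts Q v}

variable [Finite S] [Finite Act] [Finite Q] {M : MDP σ S Act} {A : NBA σ Q} {s : S}
  {ψ : Strategy (Option (S × Q)) (Act × Q)} {μ : Measure (ℕ → Option (S × Q) × (Act × Q))}

lemma liveProb_eq (hμ : IsRunMeasure (prodT M A) ψ (some (s, A.init)) μ) (v : List (S × Act)) :
    liveProb μ v = ∑' H : liveLifts Q v, preProb (prodT M A) ψ [] (some (s, A.init)) H.1 := by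
  rw [liveProb, measure_cylinder_union _ _ _ fun H hH => liveLifts_length hH]
  simp only [hμ.2]

lemma liveProb_avail (hμ : IsRunMeasure (prodT M A) ψ (some (s, A.init)) μ)
    (hψ : ValidStrategy (prodAvail M A) ψ) {v : List (S × Act)} {t : S} {a : Act}
    (h : liveProb μ (v ++ [(t, a)]) ≠ 0) : a ∈ M.avail t := by
  by_contra ha
  apply h
  rw [liveProb_eq hμ]
  refine ENNReal.tsum_eq_zero.2 fun H => ?_
  obtain ⟨H', -, q, q', hH⟩ := liveLifts_snoc H.2
  rw [hH, preProb_snoc]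
  have : ψ ([] ++ H') (some (t, q)) (a, q') = 0 := by
    by_contra h0
    exact ha (hψ _ _ ((PMF.mem_support_iff _ _).2 h0))
  simp only [this, mul_zero]

lemma tsum_liveProb_le (hμ : IsRunMeasure (prodT M A) ψ (some (s, A.init)) μ)
    (v : List (S × Act)) (t : S) :
    ∑' a, liveProb μ (v ++ [(t, a)]) ≤ liveProb μ v * nextState M.T s v t := by
  have h1 : ∀ a, liveProb μ (v ++ [(t, a)]) ≤ ∑' (H : liveLifts Q v) (q : Q) (q' : Q),
      preProb (prodT M A) ψ [] (some (s, A.init)) (H.1 ++ [(some (t, q), (a, q'))]) := by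
    intro a
    simp only [← hμ.2]
    have hsub : {ω | pre ω (v ++ [(t, a)]).length ∈ liveLifts Q (v ++ [(t, a)])} ⊆
        ⋃ (H : liveLifts Q v) (q : Q) (q' : Q),
          _root_.cylinder (H.1 ++ [(some (t, q), (a, q'))]) := by
      intro ω hω
      obtain ⟨H', hH', q, q', hH⟩ := liveLifts_snoc hω
      simp only [Set.mem_iUnion]
      refine ⟨⟨H', hH'⟩, q, q', ?_⟩
      rw [← hH]; exact pre_mem_cylinder _ _
    refine (measure_mono hsub).trans ((measure_iUnion_le _).trans ?_)
    refine ENNReal.tsum_le_tsum fun H => (measure_iUnion_le _).trans ?_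
    exact ENNReal.tsum_le_tsum fun q => measure_iUnion_le _
  refine (ENNReal.tsum_le_tsum h1).trans ?_
  rw [ENNReal.tsum_comm, liveProb_eq hμ, ← ENNReal.tsum_mul_right]
  refine ENNReal.tsum_le_tsum fun H => ?_
  rw [ENNReal.tsum_comm]
  simp only [preProb_snoc, List.nil_append, ENNReal.tsum_mul_left]
  refine mul_le_mul_right ?_ _
  refine le_trans (ENNReal.tsum_le_tsum fun q => ?_) (tsum_nextState_le M A s t H.2)
  rw [← ENNReal.tsum_prod (f := fun a q' => ψ H.1 (some (t, q)) (a, q'))]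
  simp [PMF.tsum_coe]

/-- The strategy on `M` that plays `a` after `v` in state `t` with the conditional probability that
the product run plays `a`, given that it is alive and projects to `v` followed by `t`. If that
event is null, an arbitrary available action is played. -/
noncomputable def condStrategy (M : MDP σ S Act)
    (μ : Measure (ℕ → Option (S × Q) × (Act × Q))) : Strategy S Act := fun v t =>
  if h : (∑' a, liveProb μ (v ++ [(t, a)])) ≠ 0 ∧ (∑' a, liveProb μ (v ++ [(t, a)])) ≠ ∞ then
    PMF.normalize (fun a => liveProb μ (v ++ [(t, a)])) h.1 h.2
  else PMF.pure (M.avail_nonempty t).some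

lemma condStrategy_valid (hμ : IsRunMeasure (prodT M A) ψ (some (s, A.init)) μ)
    (hψ : ValidStrategy (prodAvail M A) ψ) : ValidStrategy M.avail (condStrategy M μ) := by
  intro v t a ha
  unfold condStrategy at ha
  split_ifs at ha with h
  · rw [PMF.support_normalize] at ha
    exact liveProb_avail hμ hψ ha
  · rw [PMF.support_pure, Set.mem_singleton_iff] at ha
    rw [ha]; exact (M.avail_nonempty t).some_mem

/-- The defining property of the conditional strategy; it also holds when the condition is null,
both sides then being zero. -/
lemma liveProb_snoc (hμ : IsRunMeasure (prodT M A) ψ (some (s, A.init)) μ)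
    (v : List (S × Act)) (t : S) (b : Act) :
    liveProb μ (v ++ [(t, b)]) =
      (∑' a, liveProb μ (v ++ [(t, a)])) * condStrategy M μ v t b := by
  have := hμ.1
  have hfin : (∑' a, liveProb μ (v ++ [(t, a)])) ≠ ∞ := by
    refine ne_top_of_le_ne_top ?_ (tsum_liveProb_le hμ v t)
    exact ENNReal.mul_ne_top (measure_ne_top _ _) (PMF.apply_ne_top _ _)
  by_cases h0 : (∑' a, liveProb μ (v ++ [(t, a)])) = 0
  · rw [h0, zero_mul]
    exact ENNReal.tsum_eq_zero.1 h0 b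
  · rw [condStrategy, dif_pos ⟨h0, hfin⟩, PMF.normalize_apply, mul_comm (liveProb _ _),
      ← mul_assoc, ENNReal.mul_inv_cancel h0 hfin, one_mul]

/-- The live product runs projecting to `v` are at most as likely as `v` itself is in `M` under the
conditional strategy. -/
lemma liveProb_le_preProb (hμ : IsRunMeasure (prodT M A) ψ (some (s, A.init)) μ)
    (v : List (S × Act)) : liveProb μ v ≤ preProb M.T (condStrategy M μ) [] s v := by
  have := hμ.1
  induction v using List.reverseRecOn with
  | nil => exact prob_le_one.trans (by simp [preProb])
  | append_singleton v p ih =>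
    obtain ⟨t, b⟩ := p
    rw [liveProb_snoc hμ, preProb_snoc, List.nil_append, ← mul_assoc]
    gcongr
    exact (tsum_liveProb_le hμ v t).trans (by gcongr)

end Product

/-! ### Accepting product runs project to words of the language -/

section Acceptance
variable {σ Q S Act : Type} {M : MDP σ S Act} {A : NBA σ Q} {s : S}

/-- The projection of an infinite product run to `M`, with the dead state sent to the arbitrary
state `s`. -/
def projRun (s : S) (ω : ℕ → Option (S × Q) × (Act × Q)) (n : ℕ) : S × Act :=
  ((ω n).1.elim s Prod.fst, (ω n).2.1)

lemma measurable_projRun (s : S) :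
    Measurable (projRun s : (ℕ → Option (S × Q) × (Act × Q)) → ℕ → S × Act) :=
  measurable_pi_iff.2 fun n =>
    (measurable_from_top (f := fun p : Option (S × Q) × (Act × Q) =>
      (p.1.elim s Prod.fst, p.2.1))).comp (measurable_pi_apply n)

/-- A product run all of whose moves have positive probability and which is accepting never visits
the dead state, since that state is absorbing; its automaton components then form an accepting run
on the label of its projection. -/
lemma label_mem_lang {ω : ℕ → Option (S × Q) × (Act × Q)}
    (hstep : ∀ n, nextState (prodT M A) (some (s, A.init)) (pre ω n) (ω n).1 ≠ 0)
    (hacc : ∀ n, ∃ i, n ≤ i ∧ AccStep M A ω i) :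
    (∀ n, (ω n).1 ≠ none) ∧ MDPLabel M (projRun s ω) ∈ A.Lang := by
  have h0 : (ω 0).1 = some (s, A.init) := by
    have := hstep 0
    simpa [PMF.pure_apply] using this
  have hs : ∀ n, prodT M A (ω n).1 (ω n).2 (ω (n + 1)).1 ≠ 0 := by
    intro n
    have := hstep (n + 1)
    rwa [pre_succ, nextState_snoc] at this
  have hdead : ∀ n k, (ω n).1 = none → (ω (n + k)).1 = none := by
    intro n k hn
    induction k with
    | zero => exact hn
    | succ k ih =>
      have := hs (n + k)
      rw [ih] at this
      change (ω (n + k + 1)).1 = none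
      simpa [prodT, PMF.pure_apply] using this
  have hlive : ∀ n, (ω n).1 ≠ none := by
    intro n hn
    obtain ⟨i, hi, s1, q, a, q', s', h1, -⟩ := hacc n
    have := hdead n (i - n) hn
    rw [Nat.add_sub_cancel' hi, h1] at this
    cases this
  choose x hx using fun n => Option.ne_none_iff_exists'.1 (hlive n)
  have hproj : ∀ n, projRun s ω n = ((x n).1, (ω n).2.1) := by
    intro n; simp [projRun, hx n]
  refine ⟨hlive, fun n => (x n).2, ⟨?_, fun n => ?_⟩, fun n => ?_⟩
  · have := hx 0
    rw [h0] at this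
    simp only [Option.some.injEq] at this
    simp [← this]
  · have h := hs n
    rw [hx n, hx (n + 1)] at h
    simp only [prodT, PMF.bind_apply, ne_eq, ENNReal.tsum_eq_zero, not_forall] at h
    obtain ⟨s', h⟩ := h
    have h := right_ne_zero_of_mul h
    rw [PMF.pure_apply] at h
    have h1 := not_not.1 fun hc => h (if_neg hc)
    split_ifs at h1 with h2
    simp only [Option.some.injEq] at h1
    simp only [MDPLabel, hproj]
    rw [h1]; exact h2
  · obtain ⟨i, hi, s1, q, a, q', s', h1, h2, h3, h4, -⟩ := hacc n
    refine ⟨i, hi, ?_⟩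
    simp only [MDPLabel, hproj]
    have e1 : x i = (s1, q) := by simpa [hx i] using h1
    have e2 : x (i + 1) = (s', q') := by simpa [hx (i + 1)] using h3
    simp only [e1, e2, h2]; exact h4

end Acceptance

/-- For every NBA `A`, every finite MDP `M` over the same
alphabet and every state `s` of `M`, the syntactic satisfaction probability is
at most the semantic one: `PSat^M_A(s) ≤ PSemSat^M_A(s)`. -/
theorem psat_le_psemsat {σ Q : Type} [Fintype σ] [Fintype Q] (A : NBA σ Q)
    (S Act : Type) [Fintype S] [Fintype Act] (M : MDP σ S Act) (s : S) :
    PSat M A s ≤ PSemSat M A s := by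
  refine iSup_le fun ψ => iSup_le fun hψ => iSup_le fun μ => iSup_le fun hμ => ?_
  obtain ⟨ν, hν⟩ := exists_runMeasure M.T (condStrategy M μ) s
  have hνp := hν.1
  refine le_trans ?_ (le_iSup₂_of_le (condStrategy M μ) (condStrategy_valid hμ hψ)
    (le_iSup₂_of_le ν hν le_rfl))
  let Live : Set (ℕ → Option (S × Q) × (Act × Q)) := {ω | ∀ n, (ω n).1 ≠ none}
  have hLive : MeasurableSet Live := by
    have : Live = ⋂ n, (fun ω : ℕ → Option (S × Q) × (Act × Q) => ω n) ⁻¹' {p | p.1 ≠ none} := by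
      ext ω; simp [Live]
    rw [this]
    exact MeasurableSet.iInter fun n => measurable_pi_apply n MeasurableSpace.measurableSet_top
  have hcyl : ∀ v, ((μ.restrict Live).map (projRun s)) (_root_.cylinder v) ≤
      ν (_root_.cylinder v) := by
    intro v
    rw [Measure.map_apply (measurable_projRun s) (measurable_cylinder v),
      Measure.restrict_apply (measurable_projRun s (measurable_cylinder v)), hν.2]
    refine le_trans (measure_mono ?_) (liveProb_le_preProb hμ v)
    rintro ω ⟨h1, h2⟩
    rw [Set.mem_preimage, mem_cylinder_iff] at h1
    change (pre ω v.length).map projLive = v.map some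
    conv_rhs => rw [← h1]
    simp only [pre, List.map_map, List.map_inj_left, Function.comp_apply]
    intro n _
    obtain ⟨x, hx⟩ := Option.ne_none_iff_exists'.1 (h2 n)
    simp [projLive, projRun, hx]
  refine le_trans ?_ (measure_le_of_cylinder _ ν hcyl _)
  -- The set of runs with label in the language need not be known to be measurable: an inequality
  -- for the pushforward suffices.
  refine le_trans ?_ (Measure.le_map_apply (measurable_projRun s).aemeasurable _)
  rw [Measure.restrict_apply' hLive]
  refine measure_mono_ae ?_
  filter_upwards [ae_step_pos hμ] with ω hω hacc
  exact (label_mem_lang hω hacc).symm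
end

section
/- Let M be a finite MDP and let (C, act) be an end-component of M. Then for every state s ∈ C there is a strategy φ such that every run from s consistent with φ stays in C forever, and Pr^φ_s-almost every run visits every state–action pair (t, a) with t ∈ C and a ∈ act(t) infinitely often. -/
open scoped ENNReal
open MeasureTheory

attribute [local instance] Classical.propDecidable

/-- The history (list of state–action pairs) of the first `n` steps of `ω`. -/
def histList {S Act : Type} (ω : ℕ → S × Act) (n : ℕ) : List (S × Act) :=
  (List.range n).map fun i => ω i

/-- The infinite run `ω` starts at `s` and is consistent with the strategy `φ`:
each chosen action is in the support of the strategy and each step has positive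
transition probability. -/
def ConsistentRun {σ S Act : Type} (M : MDP σ S Act) (φ : Strategy S Act) (s : S)
    (ω : ℕ → S × Act) : Prop :=
  (ω 0).1 = s ∧
    ∀ n, (ω n).2 ∈ (φ (histList ω n) (ω n).1).support ∧
      0 < M.T (ω n).1 (ω n).2 (ω (n + 1)).1

/-- `(C, act)` is an end-component of `M`: a nonempty set of states together
with nonempty sets of available actions whose transitions stay in `C` and whose
underlying directed graph on `C` is strongly connected. -/
def IsEndComponent {σ S Act : Type} (M : MDP σ S Act) (C : Set S) (act : S → Set Act) : Prop :=
  C.Nonempty ∧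
  (∀ s ∈ C, (act s).Nonempty ∧ act s ⊆ M.avail s) ∧
  (∀ s ∈ C, ∀ a ∈ act s, ∀ s', 0 < M.T s a s' → s' ∈ C) ∧
  (∀ s ∈ C, ∀ t ∈ C,
    Relation.ReflTransGen (fun x y => x ∈ C ∧ ∃ a ∈ act x, 0 < M.T x a y) s t)

/-- The set of runs extending `v` and avoiding `x₀` in the next `k` steps. -/
def avoidAfter {S Act : Type} (x₀ : S × Act) (v : List (S × Act)) (k : ℕ) : Set (ℕ → S × Act) :=
  {ω | ω ∈ cylinder v ∧ ∀ i < k, ω (v.length + i) ≠ x₀}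

lemma mem_cylinder_append {S Act : Type} {ω : ℕ → S × Act} {v : List (S × Act)} (h : ω ∈ cylinder v) :
    ω ∈ cylinder (v ++ [ω v.length]) := by
  rintro ⟨i, hi⟩
  simp only [List.length_append, List.length_singleton] at hi
  simp only [List.get_eq_getElem]
  rcases Nat.lt_succ_iff_lt_or_eq.1 hi with h1 | h1
  · rw [List.getElem_append_left h1]
    exact h ⟨i, h1⟩
  · subst h1
    simp

section EndComponentProof

variable {S Act : Type} [Fintype S] [Fintype Act]

/-- One step of the chain with memoryless strategy `p`: the expectation of `f` at the successor of
`s`, counting only steps whose state–action pair differs from `x₀`. -/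
noncomputable def avoidStep (T : S → Act → PMF S) (p : S → PMF Act) (x₀ : S × Act)
    (f : S → ℝ≥0∞) (s : S) : ℝ≥0∞ :=
  ∑ a, p s a * (if (s, a) = x₀ then 0 else ∑ s', T s a s' * f s')

/-- The probability that the first `k` state–action pairs from a given state all differ
from `x₀`. -/
noncomputable def avoidProb (T : S → Act → PMF S) (p : S → PMF Act) (x₀ : S × Act) :
    ℕ → S → ℝ≥0∞
  | 0 => fun _ => 1
  | k + 1 => avoidStep T p x₀ (avoidProb T p x₀ k)

/-- The probability, from `s`, of first producing the sequence `v` and then, from the state reached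
after it, realising an event whose probability is given by `f`. -/
noncomputable def thenProb (T : S → Act → PMF S) (p : S → PMF Act) (f : S → ℝ≥0∞) :
    S → List (S × Act) → ℝ≥0∞
  | s, [] => f s
  | s, (t, a) :: rest =>
      (if t = s then 1 else 0) * p s a * ∑ s', T s a s' * thenProb T p f s' rest

lemma PMF.sum_eq_one {X : Type} [Fintype X] (p : PMF X) : ∑ x, p x = 1 := by
  simpa [tsum_fintype] using p.tsum_coe

lemma PMF.sum_mul_le {X : Type} [Fintype X] (p : PMF X) (h : X → ℝ≥0∞) (m : ℝ≥0∞)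
    (hle : ∀ x, p x ≠ 0 → h x ≤ m) : ∑ x, p x * h x ≤ m := by
  calc ∑ x, p x * h x ≤ ∑ x, p x * m := by
        refine Finset.sum_le_sum fun x _ => ?_
        by_cases hx : p x = 0
        · simp [hx]
        · gcongr
          exact hle x hx
    _ = m := by rw [← Finset.sum_mul, PMF.sum_eq_one, one_mul]

/-- The equality case of averaging: if an average of values at most `m` equals `m`, then every
value of positive weight equals `m`. -/
lemma PMF.eq_of_sum_mul_eq {X : Type} [Fintype X] (p : PMF X) (h : X → ℝ≥0∞) (m : ℝ≥0∞)
    (hm : m ≠ ⊤) (hle : ∀ x, p x ≠ 0 → h x ≤ m) (heq : ∑ x, p x * h x = m)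
    (x : X) (hx : p x ≠ 0) : h x = m := by
  by_contra hne
  have hlt : h x < m := lt_of_le_of_ne (hle x hx) hne
  have hle' : ∀ y, p y * h y ≤ p y * m := by
    intro y
    by_cases hy : p y = 0
    · simp [hy]
    · gcongr
      exact hle y hy
  have hrest : ∑ y ∈ Finset.univ.erase x, p y * h y ≤ ∑ y ∈ Finset.univ.erase x, p y * m :=
    Finset.sum_le_sum fun y _ => hle' y
  have hfin : ∑ y ∈ Finset.univ.erase x, p y * h y ≠ ⊤ := by
    refine ne_top_of_le_ne_top hm ?_
    rw [← heq]
    exact Finset.sum_le_sum_of_subset (Finset.erase_subset _ _)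
  have hx' : p x * h x < p x * m :=
    (ENNReal.mul_lt_mul_iff_right hx (p.apply_ne_top x)).2 hlt
  have key : ∑ y, p y * h y < ∑ y, p y * m := by
    rw [← Finset.add_sum_erase _ _ (Finset.mem_univ x),
      ← Finset.add_sum_erase _ (fun y => p y * m) (Finset.mem_univ x), add_comm,
      add_comm (p x * m)]
    exact ENNReal.add_lt_add_of_le_of_lt hfin hrest hx'
  rw [heq, ← Finset.sum_mul, PMF.sum_eq_one, one_mul] at key
  exact lt_irrefl _ key

/-! ### Avoiding a pair forever has probability zero -/

lemma avoidStep_mono (T : S → Act → PMF S) (p : S → PMF Act) (x₀ : S × Act)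
    {f g : S → ℝ≥0∞} (h : ∀ s, f s ≤ g s) (s : S) :
    avoidStep T p x₀ f s ≤ avoidStep T p x₀ g s := by
  refine Finset.sum_le_sum fun a _ => ?_
  gcongr
  split_ifs
  · exact le_rfl
  · gcongr
    exact h _

lemma avoidProb_succ_le (T : S → Act → PMF S) (p : S → PMF Act) (x₀ : S × Act) (k : ℕ) :
    ∀ s, avoidProb T p x₀ (k + 1) s ≤ avoidProb T p x₀ k s := by
  induction k with
  | zero =>
    intro s
    refine PMF.sum_mul_le _ _ _ fun a _ => ?_
    split_ifs
    · exact zero_le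
    · exact PMF.sum_mul_le _ _ _ fun _ _ => le_rfl
  | succ k ih => exact avoidStep_mono T p x₀ ih

lemma avoidProb_antitone (T : S → Act → PMF S) (p : S → PMF Act) (x₀ : S × Act) (s : S) :
    Antitone fun k => avoidProb T p x₀ k s :=
  antitone_nat_of_succ_le fun k => avoidProb_succ_le T p x₀ k s

/-- Maximum principle: a finite fixed point of `avoidStep` vanishes on an end-component whose
actions are exactly those `p` plays there, when `x₀` is one of its state–action pairs. -/
lemma fixedPoint_eq_zero {σ : Type} (M : MDP σ S Act) (C : Set S) (act : S → Set Act)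
    (hEC : IsEndComponent M C act) (p : S → PMF Act) (hp : ∀ s ∈ C, (p s).support = act s)
    (t : S) (ht : t ∈ C) (a : Act) (ha : a ∈ act t) (f : S → ℝ≥0∞) (hfin : ∀ s, f s ≠ ⊤)
    (hf : ∀ s, avoidStep M.T p (t, a) f s = f s) : ∀ s ∈ C, f s = 0 := by
  obtain ⟨hne, -, hclosed, hconn⟩ := hEC
  obtain ⟨z, hz, hmax⟩ := Set.exists_max_image C f (Set.toFinite C) hne
  suffices hz0 : f z = 0 by
    intro s hs
    simpa [hz0] using hmax s hs
  by_contra hm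
  have hmem : ∀ s ∈ C, ∀ b, p s b ≠ 0 ↔ b ∈ act s := by
    intro s hs b
    rw [← hp s hs, PMF.mem_support_iff]
  have hsucc : ∀ s ∈ C, ∀ b ∈ act s, ∀ s', M.T s b s' ≠ 0 → f s' ≤ f z := fun s hs b hb s' h =>
    hmax s' (hclosed s hs b hb s' (pos_iff_ne_zero.2 h))
  have houter : ∀ s ∈ C, f s = f z → ∀ b ∈ act s,
      (if (s, b) = (t, a) then 0 else ∑ s', M.T s b s' * f s') = f z := by
    intro s hs hsz b hb
    refine PMF.eq_of_sum_mul_eq (p s)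
      (fun b => if (s, b) = (t, a) then 0 else ∑ s', M.T s b s' * f s') (f z) (hfin z) ?_ ?_ b
      ((hmem s hs b).2 hb)
    · intro c hc
      split_ifs
      · exact zero_le
      · exact PMF.sum_mul_le _ _ _ (hsucc s hs c ((hmem s hs c).1 hc))
    · rw [← hsz]
      exact hf s
  have hreach : ∀ y, Relation.ReflTransGen
      (fun x y => x ∈ C ∧ ∃ a ∈ act x, 0 < M.T x a y) z y → f y = f z := by
    intro y hy
    induction hy with
    | refl => rfl
    | tail _ h ih =>
      obtain ⟨hx, b, hb, hpos⟩ := h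
      have h1 := houter _ hx ih b hb
      split_ifs at h1 with h2
      · exact absurd h1.symm hm
      · exact PMF.eq_of_sum_mul_eq _ _ _ (hfin z) (hsucc _ hx b hb) h1 _ hpos.ne'
  have := houter t ht (hreach t (hconn z hz t ht)) a ha
  rw [if_pos rfl] at this
  exact hm this.symm

lemma tendsto_avoidProb {σ : Type} (M : MDP σ S Act) (C : Set S) (act : S → Set Act)
    (hEC : IsEndComponent M C act) (p : S → PMF Act) (hp : ∀ s ∈ C, (p s).support = act s)
    (t : S) (ht : t ∈ C) (a : Act) (ha : a ∈ act t) (s : S) (hs : s ∈ C) :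
    Filter.Tendsto (fun k => avoidProb M.T p (t, a) k s) Filter.atTop (nhds 0) := by
  have hlim : ∀ s, Filter.Tendsto (fun k => avoidProb M.T p (t, a) k s) Filter.atTop
      (nhds (⨅ k, avoidProb M.T p (t, a) k s)) := fun s =>
    tendsto_atTop_iInf (avoidProb_antitone M.T p (t, a) s)
  have hzero := fixedPoint_eq_zero M C act hEC p hp t ht a ha
    (fun s => ⨅ k, avoidProb M.T p (t, a) k s) ?_ ?_ s hs
  · simpa only [hzero] using hlim s
  · intro s
    exact ne_top_of_le_ne_top ENNReal.one_ne_top (iInf_le (fun k => avoidProb M.T p (t, a) k s) 0)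
  · intro s
    refine tendsto_nhds_unique ?_ ((hlim s).comp (Filter.tendsto_add_atTop_nat 1))
    refine tendsto_finsetSum _ fun b _ => ?_
    refine ENNReal.Tendsto.const_mul ?_ (Or.inr ((p s).apply_ne_top b))
    split_ifs
    · exact tendsto_const_nhds
    · exact tendsto_finsetSum _ fun s' _ =>
        ENNReal.Tendsto.const_mul (hlim s') (Or.inr ((M.T s b).apply_ne_top s'))

/-! ### Following a prefix and then avoiding a pair -/

lemma preProb_eq_thenProb (T : S → Act → PMF S) (p : S → PMF Act) (v : List (S × Act)) :
    ∀ (hist : List (S × Act)) (s : S),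
      preProb T (fun _ s => p s) hist s v = thenProb T p (fun _ => 1) s v := by
  induction v with
  | nil => intro hist s; rfl
  | cons x rest ih =>
    intro hist s
    obtain ⟨t, a⟩ := x
    simp only [preProb, thenProb, tsum_fintype, ih]

lemma sum_thenProb_append (T : S → Act → PMF S) (p : S → PMF Act) (x₀ : S × Act)
    (f : S → ℝ≥0∞) (v : List (S × Act)) : ∀ s : S,
    ∑ x : S × Act, (if x = x₀ then 0 else thenProb T p f s (v ++ [x])) =
      thenProb T p (avoidStep T p x₀ f) s v := by
  induction v with
  | nil =>
    intro s
    rw [Fintype.sum_prod_type, Finset.sum_eq_single s]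
    · refine Finset.sum_congr rfl fun a _ => ?_
      by_cases h : (s, a) = x₀ <;> simp [thenProb, h]
    · intro b _ hb
      refine Finset.sum_eq_zero fun a _ => ?_
      simp [thenProb, hb]
    · simp
  | cons y rest ih =>
    intro s
    obtain ⟨t, a⟩ := y
    simp only [List.cons_append, thenProb, ← ih, Finset.mul_sum]
    rw [Finset.sum_comm]
    refine Finset.sum_congr rfl fun x _ => ?_
    by_cases h : x = x₀ <;> simp [h]

lemma measure_avoidAfter_le (T : S → Act → PMF S) (p : S → PMF Act) (x₀ : S × Act) (s : S)
    (μ : Measure (ℕ → S × Act)) (hμ : IsRunMeasure T (fun _ s => p s) s μ) (k : ℕ) :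
    ∀ v, μ (avoidAfter x₀ v k) ≤ thenProb T p (avoidProb T p x₀ k) s v := by
  induction k with
  | zero =>
    intro v
    refine (measure_mono fun ω hω => hω.1).trans_eq ((hμ.2 v).trans ?_)
    exact preProb_eq_thenProb T p v [] s
  | succ k ih =>
    intro v
    have hsub : avoidAfter x₀ v (k + 1) ⊆
        ⋃ x : S × Act, (if x = x₀ then ∅ else avoidAfter x₀ (v ++ [x]) k) := by
      intro ω hω
      refine Set.mem_iUnion.2 ⟨ω v.length, ?_⟩
      rw [if_neg (by simpa using hω.2 0 (Nat.succ_pos k))]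
      refine ⟨mem_cylinder_append hω.1, fun i hi => ?_⟩
      have := hω.2 (1 + i) (by omega)
      simpa [add_assoc] using this
    calc μ (avoidAfter x₀ v (k + 1))
        ≤ ∑ x : S × Act, μ (if x = x₀ then ∅ else avoidAfter x₀ (v ++ [x]) k) :=
          (measure_mono hsub).trans (measure_iUnion_fintype_le μ _)
      _ ≤ ∑ x : S × Act,
            (if x = x₀ then 0 else thenProb T p (avoidProb T p x₀ k) s (v ++ [x])) := by
          refine Finset.sum_le_sum fun x _ => ?_
          split_ifs
          · simp
          · exact ih _
      _ = thenProb T p (avoidProb T p x₀ (k + 1)) s v := sum_thenProb_append _ _ _ _ _ _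

lemma tendsto_thenProb (T : S → Act → PMF S) (p : S → PMF Act) (C : Set S)
    (hC : ∀ s ∈ C, ∀ a, p s a ≠ 0 → ∀ s', T s a s' ≠ 0 → s' ∈ C) (f : ℕ → S → ℝ≥0∞)
    (hf : ∀ s ∈ C, Filter.Tendsto (fun k => f k s) Filter.atTop (nhds 0))
    (v : List (S × Act)) :
    ∀ s ∈ C, Filter.Tendsto (fun k => thenProb T p (f k) s v) Filter.atTop (nhds 0) := by
  induction v with
  | nil => exact hf
  | cons x rest ih =>
    intro s hs
    obtain ⟨t, a⟩ := x
    simp only [thenProb]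
    by_cases hpa : p s a = 0
    · simp [hpa]
    have hsum : Filter.Tendsto (fun k => ∑ s', T s a s' * thenProb T p (f k) s' rest)
        Filter.atTop (nhds 0) := by
      rw [← Finset.sum_const_zero (s := (Finset.univ : Finset S))]
      refine tendsto_finsetSum _ fun s' _ => ?_
      by_cases hT : T s a s' = 0
      · simp [hT]
      · simpa using ENNReal.Tendsto.const_mul (ih s' (hC s hs a hpa s' hT))
          (Or.inr ((T s a).apply_ne_top s'))
    have hne : (if t = s then (1 : ℝ≥0∞) else 0) * p s a ≠ ⊤ :=
      ENNReal.mul_ne_top (by split_ifs <;> simp) ((p s).apply_ne_top a)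
    simpa using ENNReal.Tendsto.const_mul hsum (Or.inr hne)

end EndComponentProof

/-- once an end-component `(C, act)` of a finite MDP is entered,
there is a strategy that surely stays in `C` forever and almost surely visits
every state–action pair `(t, a)` with `t ∈ C`, `a ∈ act t` infinitely often. -/
theorem endComponent_strategy {σ S Act : Type} [Fintype σ] [Fintype S] [Fintype Act]
    (M : MDP σ S Act) (C : Set S) (act : S → Set Act) (hEC : IsEndComponent M C act) :
    ∀ s ∈ C, ∃ φ : Strategy S Act, ValidStrategy M.avail φ ∧
      (∀ ω, ConsistentRun M φ s ω → ∀ n, (ω n).1 ∈ C) ∧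
      (∀ μ, IsRunMeasure M.T φ s μ →
        μ {ω | ∀ t ∈ C, ∀ a ∈ act t, ∀ n, ∃ i, n ≤ i ∧ ω i = (t, a)} = 1) := by
  classical
  intro s hs
  obtain ⟨-, hact, hclosed, -⟩ := id hEC
  let A : S → Set Act := fun s => if s ∈ C then act s else M.avail s
  have hA : ∀ s, (A s).toFinite.toFinset.Nonempty := by
    intro s
    rw [Set.Finite.toFinset_nonempty]
    by_cases h : s ∈ C
    · simpa [A, h] using (hact s h).1
    · simpa [A, h] using M.avail_nonempty s
  let p : S → PMF Act := fun s => PMF.uniformOfFinset _ (hA s)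
  have hpA : ∀ s, (p s).support = A s := by
    intro s
    simp [p, PMF.support_uniformOfFinset]
  have hp : ∀ s ∈ C, (p s).support = act s := by
    intro s h
    simp [hpA, A, h]
  refine ⟨fun _ s => p s, ?_, ?_, ?_⟩
  · intro _ s
    change (p s).support ⊆ _
    by_cases h : s ∈ C
    · rw [hp s h]
      exact (hact s h).2
    · simp [hpA, A, h]
  · intro ω hω n
    induction n with
    | zero => exact hω.1 ▸ hs
    | succ n ih =>
      have h1 : (ω n).2 ∈ (p (ω n).1).support := (hω.2 n).1
      rw [hp _ ih] at h1
      exact hclosed _ ih _ h1 _ (hω.2 n).2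
  · intro μ hμ
    have : IsProbabilityMeasure μ := hμ.1
    have hC : ∀ s ∈ C, ∀ a, p s a ≠ 0 → ∀ s', M.T s a s' ≠ 0 → s' ∈ C := by
      intro s hs a ha s' hs'
      refine hclosed s hs a ?_ s' (pos_iff_ne_zero.2 hs')
      rw [← hp s hs]
      exact ha
    have hnull : ∀ t ∈ C, ∀ a ∈ act t, ∀ v : List (S × Act),
        μ (⋂ k, avoidAfter (t, a) v k) = 0 := by
      intro t ht a ha v
      have hlim := tendsto_thenProb M.T p C hC (avoidProb M.T p (t, a))
        (fun s hs => tendsto_avoidProb M C act hEC p hp t ht a ha s hs) v s hs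
      refine le_antisymm (ge_of_tendsto' hlim fun k => ?_) zero_le
      exact (measure_mono (Set.iInter_subset _ k)).trans
        (measure_avoidAfter_le M.T p (t, a) s μ hμ k v)
    set G : Set (ℕ → S × Act) :=
      {ω | ∀ t ∈ C, ∀ a ∈ act t, ∀ n, ∃ i, n ≤ i ∧ ω i = (t, a)} with hG
    have hcompl : μ Gᶜ = 0 := by
      have hsub : Gᶜ ⊆ ⋃ (x : S × Act) (_ : x.1 ∈ C ∧ x.2 ∈ act x.1) (v : List (S × Act)),
          ⋂ k, avoidAfter x v k := by
        intro ω hω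
        simp only [hG, Set.mem_compl_iff, Set.mem_ofPred_eq] at hω
        push Not at hω
        obtain ⟨t, ht, a, ha, n, hn⟩ := hω
        simp only [Set.mem_iUnion, Set.mem_iInter]
        refine ⟨(t, a), ⟨ht, ha⟩, histList ω n, fun k => ⟨?_, ?_⟩⟩
        · intro i
          rw [List.get_eq_getElem]
          simp [histList]
        · intro i _
          exact hn _ (by simp [histList])
      refine measure_mono_null hsub ?_
      simp only [measure_iUnion_null_iff]
      rintro ⟨t, a⟩ ⟨ht, ha⟩ v
      exact hnull t ht a ha v
    refine le_antisymm prob_le_one ?_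
    calc (1 : ℝ≥0∞) = μ (G ∪ Gᶜ) := by rw [Set.union_compl_self, measure_univ]
      _ ≤ μ G + μ Gᶜ := measure_union_le _ _
      _ = μ G := by rw [hcompl, add_zero]
end
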